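/- For every integer n ≥ 4, the error term ε(W(B_n)) = dim_ℂ R_W − (2n+1)^n of the diagonal coinvariant ring of W(B_n) satisfies 4·ε(W(B_n)) ≥ n(n−6); in particular ε(W(B_n)) grows at least quadratically, at least like n²/4. -/

import Mathlib

open MvPolynomial

/-- The action of the signed permutation `(ε, σ) ∈ W(Bₙ)` on the polynomial ring
`ℂ[x₁,…,xₙ,y₁,…,yₙ]`, sending `xᵢ ↦ εᵢ x_{σ(i)}` and `yᵢ ↦ εᵢ y_{σ(i)}`. -/
noncomputable def bAct (n : ℕ) (ε : Fin n → ℤˣ) (σ : Equiv.Perm (Fin n)) :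
    MvPolynomial (Fin n ⊕ Fin n) ℂ →ₐ[ℂ] MvPolynomial (Fin n ⊕ Fin n) ℂ :=
  aeval (Sum.elim
    (fun i => (((ε i : ℤ) : ℂ)) • X (Sum.inl (σ i)))
    (fun i => (((ε i : ℤ) : ℂ)) • X (Sum.inr (σ i))))

/-- The ideal `I_W` generated by the `W(Bₙ)`-invariant polynomials of positive degree
(equivalently, by the invariant polynomials with zero constant term). -/
noncomputable def diagIdeal (n : ℕ) : Ideal (MvPolynomial (Fin n ⊕ Fin n) ℂ) :=
  Ideal.span {f | (∀ ε σ, bAct n ε σ f = f) ∧ constantCoeff f = 0}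

/-!
On `M = ℂ[x] / x ^ (2 * n + 1)` let `y` act by the Dunkl operator of `ℤ / 2` whose parameter makes
it well defined on `M`; the commutator of `x` and `y` then acts by a scalar on each parity. Sending
the monomial `∏ᵢ mᵢ(xᵢ, yᵢ)` to the determinant of the vectors `mᵢ(x, y) • x ^ (2 * j + 1)`,
expanded in `M ^ ⊗ n`, is a surjection onto `M ^ ⊗ n` which is linear over `ℂ[x₁,…,xₙ,y₁,…,yₙ]` up
to terms of lower degree. The ideal `J` of its leading terms therefore has colength at least
`(2 * n + 1) ^ n`.

Symmetric polynomials are mapped to alternating tensors, which are determined by their coefficients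
at increasing tuples of elements of `{0, …, 2 * n}`. If all sites have even degree, only odd tuples
contribute. There is just one increasing odd tuple, so polarized power sums of even degree have the
same image as a constant; hence they lie in `J`, and so does the ideal `I` generated by the
invariants. If all sites have odd degree, only even tuples contribute. The `n + 1` increasing ones
are accounted for by symmetrized monomials of degree `n`, so symmetrized monomials of higher degree
lie in `J`.

This applies to the symmetrizations `s_w` of `x₀ ^ 3 * y₁ ⋯ y_w * x_{w+1} ⋯ x_{n-1}`. For `i < n`
and `3 ≤ w ≤ n - 3`, the products `xᵢ * s_w` are linearly independent modulo `I`, because explicit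
functionals vanishing on the ideal generated by the power sums of even degree separate them. They
contribute `n * (n - 5)` further dimensions.
-/

namespace DiagonalCoinvariant

/-- The ambient ring `ℂ[x₁,…,xₙ,y₁,…,yₙ]`. -/
abbrev DiagonalRing (n : ℕ) := MvPolynomial (Fin n ⊕ Fin n) ℂ

/-- The total degree `a + b` of the bidegree `(a, b)`. -/
def bideg : ℕ × ℕ →+ ℕ := AddMonoidHom.fst ℕ ℕ + AddMonoidHom.snd ℕ ℕ

lemma bideg_apply (m : ℕ × ℕ) : bideg m = m.1 + m.2 := rfl

lemma two_le_bideg {m : ℕ × ℕ} (hm : m ≠ 0) (heven : Even (bideg m)) : 2 ≤ bideg m := by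
  have hpos : bideg m ≠ 0 := by simpa [bideg_apply, Prod.ext_iff] using hm
  obtain ⟨k, hk⟩ := heven
  omega

section Monomials

variable {n : ℕ}

/-- Exponent vectors of monomials in `DiagonalRing n`, regrouped by sites: the site `i` carries
the pair of exponents of `xᵢ` and `yᵢ`. -/
noncomputable def exponentEquiv (n : ℕ) : (Fin n → ℕ × ℕ) ≃+ (Fin n ⊕ Fin n →₀ ℕ) where
  toFun e := Finsupp.equivFunOnFinite.symm (Sum.elim (fun i ↦ (e i).1) (fun i ↦ (e i).2))
  invFun d i := (d (Sum.inl i), d (Sum.inr i))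
  left_inv e := by ext i <;> simp
  right_inv d := by ext (i | i) <;> simp
  map_add' e e' := by ext (i | i) <;> simp

@[simp]
lemma exponentEquiv_inl (e : Fin n → ℕ × ℕ) (i : Fin n) : exponentEquiv n e (Sum.inl i) = (e i).1 :=
  rfl

@[simp]
lemma exponentEquiv_inr (e : Fin n → ℕ × ℕ) (i : Fin n) : exponentEquiv n e (Sum.inr i) = (e i).2 :=
  rfl

lemma degree_exponentEquiv (e : Fin n → ℕ × ℕ) :
    (exponentEquiv n e).degree = ∑ i, bideg (e i) := by
  simp [Finsupp.degree_eq_sum, bideg_apply, Finset.sum_add_distrib]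

/-- The monomial `∏ᵢ xᵢ ^ (e i).1 * yᵢ ^ (e i).2`. -/
noncomputable def mon (e : Fin n → ℕ × ℕ) : DiagonalRing n := monomial (exponentEquiv n e) 1

lemma mon_add (e e' : Fin n → ℕ × ℕ) : mon (e + e') = mon e * mon e' := by
  simp [mon, monomial_mul]

lemma mon_zero : mon (0 : Fin n → ℕ × ℕ) = 1 := by
  simp [mon]

lemma mon_eq_prod (e : Fin n → ℕ × ℕ) :
    mon e = ∏ i, (X (Sum.inl i) ^ (e i).1 * X (Sum.inr i) ^ (e i).2 : DiagonalRing n) := by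
  rw [mon, monomial_eq, Finsupp.prod_fintype _ _ (by simp)]
  simp [Finset.prod_mul_distrib]

lemma X_inl_eq_mon (i : Fin n) : (X (Sum.inl i) : DiagonalRing n) = mon (Pi.single i (1, 0)) := by
  refine congrArg (monomial · 1) (Finsupp.ext ?_)
  rintro (j | j) <;> obtain rfl | hji := eq_or_ne j i <;> simp [*, Ne.symm]

lemma X_inr_eq_mon (i : Fin n) : (X (Sum.inr i) : DiagonalRing n) = mon (Pi.single i (0, 1)) := by
  refine congrArg (monomial · 1) (Finsupp.ext ?_)
  rintro (j | j) <;> obtain rfl | hji := eq_or_ne j i <;> simp [*, Ne.symm]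

lemma mon_isHomogeneous (e : Fin n → ℕ × ℕ) : (mon e).IsHomogeneous (∑ i, bideg (e i)) :=
  isHomogeneous_monomial 1 (degree_exponentEquiv e)

/-- The monomials as a basis of `DiagonalRing n`. -/
noncomputable def monBasis (n : ℕ) : Module.Basis (Fin n → ℕ × ℕ) ℂ (DiagonalRing n) :=
  (basisMonomials (Fin n ⊕ Fin n) ℂ).reindex (exponentEquiv n).symm.toEquiv

@[simp]
lemma monBasis_apply (e : Fin n → ℕ × ℕ) : monBasis n e = mon e := by
  simp [monBasis, mon]

lemma monBasis_repr_apply (f : DiagonalRing n) (e : Fin n → ℕ × ℕ) :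
    (monBasis n).repr f e = coeff (exponentEquiv n e) f := rfl

lemma bAct_mon (ε : Fin n → ℤˣ) (σ : Equiv.Perm (Fin n)) (e : Fin n → ℕ × ℕ) :
    bAct n ε σ (mon e) = (∏ i, (((ε i : ℤ) : ℂ)) ^ bideg (e i)) • mon (e ∘ σ.symm) := by
  rw [mon_eq_prod, mon_eq_prod, map_prod,
    ← Equiv.prod_comp σ fun i ↦ X (Sum.inl i) ^ _ * X (Sum.inr i) ^ _, ← Finset.prod_smul]
  refine Finset.prod_congr rfl fun i _ ↦ ?_
  simp only [bAct, map_mul, map_pow, aeval_X, Sum.elim_inl, Sum.elim_inr, Function.comp_apply,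
    Equiv.symm_apply_apply, smul_pow, bideg_apply, pow_add, smul_mul_smul_comm]

lemma bAct_one_mon (σ : Equiv.Perm (Fin n)) (e : Fin n → ℕ × ℕ) :
    bAct n 1 σ (mon e) = mon (e ∘ σ.symm) := by
  simp [bAct_mon]

end Monomials

section PolarizedPowerSums

variable {n : ℕ}

/-- The polarized power sum `∑ₖ xₖ ^ a * yₖ ^ b` of bidegree `m = (a, b)`. -/
noncomputable def polarizedPowerSum (n : ℕ) (m : ℕ × ℕ) : DiagonalRing n :=
  ∑ k, mon (Pi.single k m)

/-- The ideal generated by the polarized power sums of positive even degree. -/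
noncomputable def evenPowerSumIdeal (n : ℕ) : Ideal (DiagonalRing n) :=
  Ideal.span {f | ∃ m, m ≠ 0 ∧ Even (bideg m) ∧ polarizedPowerSum n m = f}

/-- The sum of the images of a polynomial under the simultaneous permutations of the variables. -/
noncomputable def symmetrize (n : ℕ) : DiagonalRing n →ₗ[ℂ] DiagonalRing n :=
  ∑ σ, (bAct n 1 σ).toLinearMap

lemma symmetrize_mon (e : Fin n → ℕ × ℕ) :
    symmetrize n (mon e) = ∑ σ : Equiv.Perm (Fin n), mon (e ∘ σ) := by
  simp only [symmetrize, LinearMap.sum_apply, AlgHom.toLinearMap_apply, bAct_one_mon]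
  exact Fintype.sum_equiv (Equiv.inv _) _ _ fun σ ↦ rfl

lemma symmetrize_mon_comp (e : Fin n → ℕ × ℕ) (τ : Equiv.Perm (Fin n)) :
    symmetrize n (mon (e ∘ τ)) = symmetrize n (mon e) := by
  rw [symmetrize_mon, symmetrize_mon]
  exact Fintype.sum_equiv (Equiv.mulLeft τ) _ _ fun σ ↦ rfl

lemma bAct_one_symmetrize_mon (σ : Equiv.Perm (Fin n)) (e : Fin n → ℕ × ℕ) :
    bAct n 1 σ (symmetrize n (mon e)) = symmetrize n (mon e) := by
  simp only [symmetrize_mon, map_sum, bAct_one_mon]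
  exact Fintype.sum_equiv (Equiv.mulRight σ.symm) _ _ fun τ ↦ rfl

lemma bAct_one_polarizedPowerSum (σ : Equiv.Perm (Fin n)) (m : ℕ × ℕ) :
    bAct n 1 σ (polarizedPowerSum n m) = polarizedPowerSum n m := by
  simp only [polarizedPowerSum, map_sum, bAct_one_mon, Pi.single_comp_equiv, Equiv.symm_symm]
  exact Fintype.sum_equiv σ _ _ fun k ↦ rfl

lemma polarizedPowerSum_mul_mon (m : ℕ × ℕ) (e : Fin n → ℕ × ℕ) :
    polarizedPowerSum n m * mon e = ∑ k, mon (e + Pi.single k m) := by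
  simp only [mul_comm _ (mon e), polarizedPowerSum, Finset.mul_sum, mon_add]

lemma polarizedPowerSum_mul_symmetrize_mon (m : ℕ × ℕ) (e : Fin n → ℕ × ℕ) :
    polarizedPowerSum n m * symmetrize n (mon e) =
      ∑ j, symmetrize n (mon (e + Pi.single j m)) := by
  simp only [symmetrize_mon, Finset.mul_sum, polarizedPowerSum_mul_mon]
  refine (Finset.sum_congr rfl fun σ _ ↦ Fintype.sum_equiv σ _ _ fun k ↦ ?_).trans Finset.sum_comm
  congr 1
  ext i : 1
  simp [Pi.single_apply]

lemma swap_comp_update_add_single {ι M : Type*} [DecidableEq ι] [AddZeroClass M] (e : ι → M)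
    {i j : ι} (hj : Function.update e i 0 j = 0) :
    (Function.update e i 0 + Pi.single j (e i)) ∘ Equiv.swap i j = e := by
  ext k
  obtain rfl | hij := eq_or_ne j i
  · obtain rfl | hk := eq_or_ne k j <;> simp [*]
  · rw [Function.update_of_ne hij] at hj
    obtain rfl | hki := eq_or_ne k i
    · simp [hj, Function.update_of_ne hij]
    · obtain rfl | hkj := eq_or_ne k j
      · simp [hj, hki.symm]
      · simp [Equiv.swap_apply_of_ne_of_ne hki hkj, hki, hkj]

lemma support_update_add_single_ssubset {ι M : Type*} [DecidableEq ι] [AddZeroClass M] (e : ι → M)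
    {i j : ι} (hi : e i ≠ 0) (hj : Function.update e i 0 j ≠ 0) :
    Function.support (Function.update e i 0 + Pi.single j (e i)) ⊂ Function.support e := by
  have hji : j ≠ i := by rintro rfl; simp at hj
  rw [Function.update_of_ne hji] at hj
  refine ⟨fun k hk ↦ ?_, fun hsub ↦ ?_⟩
  · obtain rfl | hki := eq_or_ne k i
    · exact hi
    · obtain rfl | hkj := eq_or_ne k j
      · exact hj
      · simpa [hki, hkj] using hk
  · simpa [hji.symm] using hsub (Function.mem_support.2 hi)

lemma symmetrize_mon_mem {e : Fin n → ℕ × ℕ} (heven : ∀ i, Even (bideg (e i))) (he : e ≠ 0) :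
    symmetrize n (mon e) ∈ evenPowerSumIdeal n := by
  induction hs : (Function.support e).ncard using Nat.strong_induction_on generalizing e with
  | _ N ih =>
  obtain ⟨i, hi⟩ : ∃ i, e i ≠ 0 := Function.ne_iff.1 he
  set e' := Function.update e i 0 with he'
  have hprod : ∑ j, symmetrize n (mon (e' + Pi.single j (e i))) ∈ evenPowerSumIdeal n := by
    rw [← polarizedPowerSum_mul_symmetrize_mon]
    exact Ideal.mul_mem_right _ _ (Ideal.subset_span ⟨e i, hi, heven i, rfl⟩)
  have hzero : ∀ j ∈ Finset.univ.filter (e' · = 0),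
      symmetrize n (mon (e' + Pi.single j (e i))) = symmetrize n (mon e) := fun j hj ↦ by
    rw [← symmetrize_mon_comp _ (Equiv.swap i j),
      swap_comp_update_add_single e (Finset.mem_filter.1 hj).2]
  have hnonzero : ∀ j ∈ Finset.univ.filter (¬ e' · = 0),
      symmetrize n (mon (e' + Pi.single j (e i))) ∈ evenPowerSumIdeal n := fun j hj ↦ by
    replace hj := (Finset.mem_filter.1 hj).2
    refine ih _ (hs ▸ Set.ncard_lt_ncard (support_update_add_single_ssubset e hi hj))
      (fun k ↦ ?_) (fun h ↦ hj ?_) rfl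
    · simp only [he', Pi.add_apply, Function.update_apply, Pi.single_apply, map_add]
      split_ifs <;> simp [heven, Even.add]
    · have := congrFun h j
      simp_all
  rw [← Finset.sum_filter_add_sum_filter_not _ (e' · = 0), Finset.sum_congr rfl hzero,
    Finset.sum_const, Ideal.add_mem_iff_left _ (Ideal.sum_mem _ hnonzero),
    ← Nat.cast_smul_eq_nsmul ℂ] at hprod
  refine (Submodule.smul_mem_iff ((evenPowerSumIdeal n).restrictScalars ℂ) ?_).1 hprod
  exact Nat.cast_ne_zero.2 (Finset.card_ne_zero_of_mem (a := i) (by simp [he']))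

lemma coeff_bAct_one (ε : Fin n → ℤˣ) (f : DiagonalRing n) (e : Fin n → ℕ × ℕ) :
    coeff (exponentEquiv n e) (bAct n ε 1 f) =
      (∏ i, (((ε i : ℤ) : ℂ)) ^ bideg (e i)) * coeff (exponentEquiv n e) f := by
  suffices lcoeff ℂ (exponentEquiv n e) ∘ₗ (bAct n ε 1).toLinearMap =
      (∏ i, (((ε i : ℤ) : ℂ)) ^ bideg (e i)) • lcoeff ℂ (exponentEquiv n e) from
    LinearMap.congr_fun this f
  refine (monBasis n).ext fun e' ↦ ?_
  suffices (∏ i, (((ε i : ℤ) : ℂ)) ^ bideg (e' i)) * coeff (exponentEquiv n e) (mon e') =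
      (∏ i, (((ε i : ℤ) : ℂ)) ^ bideg (e i)) * coeff (exponentEquiv n e) (mon e') by
    simpa [bAct_mon, ← Equiv.Perm.inv_def] using this
  obtain rfl | h := eq_or_ne e' e
  · rfl
  · simp [mon, coeff_monomial, h]

lemma coeff_eq_zero_of_odd {f : DiagonalRing n} (hf : ∀ ε, bAct n ε 1 f = f)
    {e : Fin n → ℕ × ℕ} {i : Fin n} (hi : Odd (bideg (e i))) :
    coeff (exponentEquiv n e) f = 0 := by
  have h := coeff_bAct_one (Function.update 1 i (-1)) f e
  rw [hf, Finset.prod_eq_single i (fun j _ hj ↦ by simp [hj]) (by simp)] at h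
  simp only [Function.update_self, Units.val_neg, Units.val_one, Int.cast_neg, Int.cast_one,
    hi.neg_one_pow] at h
  linear_combination h / 2

theorem diagIdeal_le_evenPowerSumIdeal : diagIdeal n ≤ evenPowerSumIdeal n := by
  refine Ideal.span_le.2 ?_
  rintro f ⟨hf, hf0⟩
  have hspan : f ∈ Submodule.span ℂ (mon '' {e | (∀ i, Even (bideg (e i))) ∧ e ≠ 0}) := by
    simp only [← monBasis_apply]
    rw [Module.Basis.mem_span_image]
    refine fun e he ↦ ⟨fun i ↦ ?_, ?_⟩
    · by_contra hi
      exact Finsupp.mem_support_iff.1 he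
        (coeff_eq_zero_of_odd (fun ε ↦ hf ε 1) (Nat.not_even_iff_odd.1 hi))
    · rintro rfl
      refine Finsupp.mem_support_iff.1 he ?_
      rwa [monBasis_repr_apply, map_zero]
  have hsym : symmetrize n f ∈ (evenPowerSumIdeal n).restrictScalars ℂ := by
    suffices Submodule.span ℂ _ ≤ ((evenPowerSumIdeal n).restrictScalars ℂ).comap (symmetrize n)
      from this hspan
    rw [Submodule.span_le]
    rintro _ ⟨e, ⟨heven, he⟩, rfl⟩
    exact symmetrize_mon_mem heven he
  have hcard : symmetrize n f = (n.factorial : ℂ) • f := by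
    simp [symmetrize, hf, Fintype.card_perm, Nat.cast_smul_eq_nsmul]
  rw [hcard] at hsym
  exact (Submodule.smul_mem_iff _ (Nat.cast_ne_zero.2 n.factorial_ne_zero)).1 hsym

end PolarizedPowerSums

section CubicPairing

variable {ι : Type*} {A B : Finset ι} {e e' : ι → ℕ × ℕ} {i k l p q : ι} {m m' : ℕ × ℕ} {w : ℕ}

lemma eq_of_bideg_eq_one (h : bideg m = 1) : m = (1, 0) ∨ m = (0, 1) := by
  obtain ⟨a, b⟩ := m
  simp only [bideg_apply, Prod.mk.injEq] at *
  omega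

/-- The factor contributed by the sites of `B`: it is `a! * b!` if the part of the monomial
supported on `B` is a product of `a` different `xᵢ` and `b` different `yᵢ` exhausting all the sites
of `B`, and `0` otherwise. -/
def linearWeight (B : Finset ι) (e : ι → ℕ × ℕ) : ℤ :=
  if ∀ i ∈ B, bideg (e i) = 1 then
    ((∑ i ∈ B, (e i).1).factorial * (∑ i ∈ B, (e i).2).factorial : ℕ)
  else 0

/-- The signed indicator `(-1) ^ b` of the bidegrees `(a, b)` of total degree three. -/
def cubicSign (m : ℕ × ℕ) : ℤ :=
  if bideg m = 3 then (-1) ^ m.2 else 0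

lemma linearWeight_of_bideg_eq_one (h : ∀ i ∈ B, bideg (e i) = 1) :
    linearWeight B e = ((∑ i ∈ B, (e i).1).factorial * (∑ i ∈ B, (e i).2).factorial : ℕ) :=
  if_pos h

lemma linearWeight_eq_zero (hi : i ∈ B) (h : bideg (e i) ≠ 1) : linearWeight B e = 0 :=
  if_neg fun hB ↦ h (hB i hi)

lemma linearWeight_congr (h : ∀ i ∈ B, e i = e' i) : linearWeight B e = linearWeight B e' := by
  unfold linearWeight
  rw [Finset.sum_congr rfl fun i hi ↦ congrArg Prod.fst (h i hi),
    Finset.sum_congr rfl fun i hi ↦ congrArg Prod.snd (h i hi)]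
  exact if_congr (forall₂_congr fun i hi ↦ by rw [h i hi]) rfl rfl

lemma cubicSign_eq_zero (h : bideg m ≠ 3) : cubicSign m = 0 := if_neg h

variable [DecidableEq ι]

lemma linearWeight_erase (h : ∀ i ∈ B, bideg (e i) = 1) (hl : l ∈ B) :
    linearWeight (B.erase l) e =
      ((∑ i ∈ B, (e i).1 - (e l).1).factorial * (∑ i ∈ B, (e i).2 - (e l).2).factorial : ℕ) := by
  rw [linearWeight_of_bideg_eq_one fun i hi ↦ h i (Finset.mem_of_mem_erase hi),
    ← Finset.add_sum_erase B (fun i ↦ (e i).1) hl, ← Finset.add_sum_erase B (fun i ↦ (e i).2) hl,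
    Nat.add_sub_cancel_left, Nat.add_sub_cancel_left]

lemma sum_fst_mul_linearWeight_erase (h : ∀ i ∈ B, bideg (e i) = 1)
    (hx : ∑ i ∈ B, (e i).1 ≠ 0) :
    ∑ l ∈ B, ((e l).1 : ℤ) * linearWeight (B.erase l) e = linearWeight B e := by
  have hterm : ∀ l ∈ B, ((e l).1 : ℤ) * linearWeight (B.erase l) e =
      (e l).1 * ((∑ i ∈ B, (e i).1 - 1).factorial * (∑ i ∈ B, (e i).2).factorial : ℕ) := by
    intro l hl
    rw [linearWeight_erase h hl]
    rcases eq_of_bideg_eq_one (h l hl) with hl | hl <;> simp [hl]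
  rw [Finset.sum_congr rfl hterm, ← Finset.sum_mul, linearWeight_of_bideg_eq_one h,
    ← Nat.mul_factorial_pred hx]
  push_cast
  ring

lemma sum_snd_mul_linearWeight_erase (h : ∀ i ∈ B, bideg (e i) = 1)
    (hy : ∑ i ∈ B, (e i).2 ≠ 0) :
    ∑ l ∈ B, ((e l).2 : ℤ) * linearWeight (B.erase l) e = linearWeight B e := by
  have hterm : ∀ l ∈ B, ((e l).2 : ℤ) * linearWeight (B.erase l) e =
      (e l).2 * ((∑ i ∈ B, (e i).1).factorial * (∑ i ∈ B, (e i).2 - 1).factorial : ℕ) := by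
    intro l hl
    rw [linearWeight_erase h hl]
    rcases eq_of_bideg_eq_one (h l hl) with hl | hl <;> simp [hl]
  rw [Finset.sum_congr rfl hterm, ← Finset.sum_mul, linearWeight_of_bideg_eq_one h,
    ← Nat.mul_factorial_pred hy]
  push_cast
  ring

lemma sum_neg_one_pow_mul_linearWeight_erase (h : ∀ i ∈ B, bideg (e i) = 1)
    (hx : ∑ i ∈ B, (e i).1 ≠ 0) (hy : ∑ i ∈ B, (e i).2 ≠ 0) :
    ∑ l ∈ B, (-1) ^ (e l).2 * linearWeight (B.erase l) e = 0 := by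
  have hsign : ∀ l ∈ B, (-1 : ℤ) ^ (e l).2 = (e l).1 - (e l).2 := by
    intro l hl
    rcases eq_of_bideg_eq_one (h l hl) with hl | hl <;> simp [hl]
  rw [Finset.sum_congr rfl fun l hl ↦ by rw [hsign l hl, sub_mul], Finset.sum_sub_distrib,
    sum_fst_mul_linearWeight_erase h hx, sum_snd_mul_linearWeight_erase h hy, sub_self]

lemma sum_cubicSign_add_mul_linearWeight_erase (hm : m ≠ 0) (heven : Even (bideg m))
    (h : bideg m = 2 → (∀ i ∈ B, bideg (e i) = 1) →
      ∑ i ∈ B, (e i).1 ≠ 0 ∧ ∑ i ∈ B, (e i).2 ≠ 0) :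
    ∑ l ∈ B, cubicSign (e l + m) * linearWeight (B.erase l) e = 0 := by
  have hm2 := two_le_bideg hm heven
  by_cases hlin : ∀ i ∈ B, bideg (e i) = 1
  · obtain hm2 | hm2 := eq_or_ne (bideg m) 2
    · obtain ⟨hx, hy⟩ := h hm2 hlin
      rw [← mul_zero ((-1 : ℤ) ^ m.2), ← sum_neg_one_pow_mul_linearWeight_erase hlin hx hy,
        Finset.mul_sum]
      refine Finset.sum_congr rfl fun l hl ↦ ?_
      rw [cubicSign, if_pos (by rw [map_add, hlin l hl, hm2]), Prod.snd_add, pow_add]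
      ring
    · refine Finset.sum_eq_zero fun l hl ↦ ?_
      rw [cubicSign_eq_zero (by rw [map_add, hlin l hl]; omega), zero_mul]
  · push Not at hlin
    obtain ⟨b, hb, hb1⟩ := hlin
    refine Finset.sum_eq_zero fun l hl ↦ ?_
    obtain rfl | hbl := eq_or_ne b l
    · obtain ⟨r, hr⟩ := heven
      rw [cubicSign_eq_zero (by rw [map_add]; omega), zero_mul]
    · rw [linearWeight_eq_zero (Finset.mem_erase.2 ⟨hbl, hb⟩) hb1, mul_zero]

/-- The contribution to `cubicPairing A w e` of the ordered pair of sites `(p, q)`, where `p`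
carries `xₚ³`, `q` carries a cubic monomial, and all other sites of `A` are linear. -/
def pairWeight (A : Finset ι) (e : ι → ℕ × ℕ) (p q : ι) : ℤ :=
  (if e p = (3, 0) then 1 else 0) * cubicSign (e q) * linearWeight ((A.erase p).erase q) e

/-- An integral linear functional on the polynomials in the sites of `A`, given by its values on
monomials. It detects the monomials of `y`-degree `w` with two cubic sites and all other sites
linear. -/
def cubicPairing (A : Finset ι) (w : ℕ) (e : ι → ℕ × ℕ) : ℤ :=
  if ∑ i ∈ A, (e i).2 = w then ∑ p ∈ A, ∑ q ∈ A.erase p, pairWeight A e p q else 0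

lemma pairWeight_congr (hp : p ∈ A) (hq : q ∈ A) (h : ∀ i ∈ A, e i = e' i) :
    pairWeight A e p q = pairWeight A e' p q := by
  rw [pairWeight, pairWeight, h p hp, h q hq, linearWeight_congr fun i hi ↦
    h i (Finset.mem_of_mem_erase (Finset.mem_of_mem_erase hi))]

lemma pairWeight_eq_zero (hk : k ∈ A) (h : 2 ≤ bideg (e k)) (hkp : k ≠ p) (hkq : k ≠ q) :
    pairWeight A e p q = 0 := by
  rw [pairWeight, linearWeight_eq_zero (i := k) (by simp [hk, hkp, hkq]) (by omega), mul_zero]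

lemma cubicPairing_congr (h : ∀ i ∈ A, e i = e' i) : cubicPairing A w e = cubicPairing A w e' := by
  rw [cubicPairing, cubicPairing, Finset.sum_congr rfl fun i hi ↦ congrArg Prod.snd (h i hi)]
  exact congrArg (ite _ · 0) (Finset.sum_congr rfl fun p hp ↦ Finset.sum_congr rfl fun q hq ↦
    pairWeight_congr hp (Finset.mem_of_mem_erase hq) h)

lemma cubicPairing_eq_zero (h : ∑ i ∈ A, (e i).2 ≠ w) : cubicPairing A w e = 0 := if_neg h

lemma cubicPairing_eq_zero_of_four_le (hk : k ∈ A) (h : 4 ≤ bideg (e k)) :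
    cubicPairing A w e = 0 := by
  refine ite_eq_right_iff.2 fun _ ↦ Finset.sum_eq_zero fun p _ ↦ Finset.sum_eq_zero fun q _ ↦ ?_
  obtain rfl | hkp := eq_or_ne k p
  · have : e k ≠ (3, 0) := by intro hek; simp [hek, bideg_apply] at h
    simp [pairWeight, this]
  · obtain rfl | hkq := eq_or_ne k q
    · simp [pairWeight, cubicSign_eq_zero (m := e k) (by omega)]
    · exact pairWeight_eq_zero hk (by omega) hkp hkq

lemma cubicPairing_eq_of_two_le (hk : k ∈ A) (hl : l ∈ A) (hkl : k ≠ l) (hk2 : 2 ≤ bideg (e k))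
    (hl2 : 2 ≤ bideg (e l)) :
    cubicPairing A w e =
      if ∑ i ∈ A, (e i).2 = w then pairWeight A e k l + pairWeight A e l k else 0 := by
  refine congrArg (ite _ · 0) ?_
  rw [Finset.sum_eq_add_of_mem k l hk hl hkl]
  · congr 1
    · exact Finset.sum_eq_single_of_mem l (by simp [hl, hkl.symm]) fun q _ hql ↦
        pairWeight_eq_zero hl hl2 hkl.symm hql.symm
    · exact Finset.sum_eq_single_of_mem k (by simp [hk, hkl]) fun q _ hqk ↦
        pairWeight_eq_zero hk hk2 hkl hqk.symm
  · rintro p - ⟨hpk, hpl⟩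
    refine Finset.sum_eq_zero fun q hq ↦ ?_
    obtain rfl | hkq := eq_or_ne k q
    · exact pairWeight_eq_zero hl hl2 hpl.symm hkl.symm
    · exact pairWeight_eq_zero hk hk2 hpk.symm hkq

lemma sum_map_add_single {M N : Type*} [AddCommMonoid M] [AddCommMonoid N] (f : M →+ N)
    (e : ι → M) (hk : k ∈ A) (m : M) :
    ∑ i ∈ A, f ((e + Pi.single k m : ι → M) i) = ∑ i ∈ A, f (e i) + f m := by
  simp only [Pi.add_apply, map_add, Finset.sum_add_distrib]
  congr 1
  rw [Finset.sum_eq_single_of_mem k hk fun i _ hik ↦ by simp [hik], Pi.single_eq_same]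

lemma cubicPairing_add_single_add_single (hk : k ∈ A) (hl : l ∈ A) (hkl : k ≠ l)
    (hm : 2 ≤ bideg m) (hm' : 2 ≤ bideg m') :
    cubicPairing A w (e + Pi.single k m + Pi.single l m') =
      if ∑ i ∈ A, (e i).2 + m.2 + m'.2 = w then
        ((if e k + m = (3, 0) then 1 else 0) * cubicSign (e l + m') +
          (if e l + m' = (3, 0) then 1 else 0) * cubicSign (e k + m)) *
          linearWeight ((A.erase k).erase l) e
      else 0 := by
  set E := e + Pi.single k m + Pi.single l m' with hE
  have hEk : E k = e k + m := by simp [E, hkl]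
  have hEl : E l = e l + m' := by simp [E, hkl.symm]
  have hsum : ∑ i ∈ A, (E i).2 = ∑ i ∈ A, (e i).2 + m.2 + m'.2 := by
    rw [← AddMonoidHom.coe_snd, hE, sum_map_add_single _ _ hl, sum_map_add_single _ _ hk]
  have hrest : linearWeight ((A.erase k).erase l) E = linearWeight ((A.erase k).erase l) e := by
    refine linearWeight_congr fun i hi ↦ ?_
    simp only [Finset.mem_erase] at hi
    simp [E, hi.1, hi.2.1]
  rw [cubicPairing_eq_of_two_le hk hl hkl (by rw [hEk, map_add]; omega)
    (by rw [hEl, map_add]; omega), hsum, pairWeight, pairWeight, Finset.erase_right_comm (a := l),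
    hrest, hEk, hEl, add_mul]

lemma sum_sum_cubicSign_eq_zero (hw : 3 ≤ w) (hA : w + 2 ≤ A.card) (hm' : m' ≠ 0)
    (heven' : Even (bideg m')) (hy : ∑ i ∈ A, (e i).2 + m.2 + m'.2 = w) :
    ∑ k ∈ A, ∑ l ∈ A.erase k, (if e k + m = (3, 0) then 1 else 0) * cubicSign (e l + m') *
      linearWeight ((A.erase k).erase l) e = 0 := by
  refine Finset.sum_eq_zero fun k hk ↦ ?_
  split_ifs with hcubic
  · simp only [one_mul]
    refine sum_cubicSign_add_mul_linearWeight_erase hm' heven' fun hm2 hlin ↦ ?_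
    have hek : (e k).2 = 0 ∧ m.2 = 0 := by simpa using congrArg Prod.snd hcubic
    have hsnd := Finset.add_sum_erase A (fun i ↦ (e i).2) hk
    have hcard : ∑ i ∈ A.erase k, (e i).1 + ∑ i ∈ A.erase k, (e i).2 = A.card - 1 := by
      rw [← Finset.sum_add_distrib, ← Finset.card_erase_of_mem hk, Finset.card_eq_sum_ones]
      exact Finset.sum_congr rfl hlin
    rw [bideg_apply] at hm2
    omega
  · simp

lemma sum_sum_cubicPairing_eq_zero (hw : 3 ≤ w) (hA : w + 2 ≤ A.card) (e : ι → ℕ × ℕ)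
    (hm : m ≠ 0) (heven : Even (bideg m)) (hm' : m' ≠ 0) (heven' : Even (bideg m')) :
    ∑ k ∈ A, ∑ l ∈ A, cubicPairing A w (e + Pi.single k m + Pi.single l m') = 0 := by
  have h2 := two_le_bideg hm heven
  have h2' := two_le_bideg hm' heven'
  have hdiag : ∀ k ∈ A, ∑ l ∈ A, cubicPairing A w (e + Pi.single k m + Pi.single l m') =
      ∑ l ∈ A.erase k, cubicPairing A w (e + Pi.single k m + Pi.single l m') := by
    intro k hk
    rw [← Finset.add_sum_erase A _ hk, cubicPairing_eq_zero_of_four_le hk, zero_add]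
    simp only [Pi.add_apply, Pi.single_eq_same, map_add]
    omega
  have hoff : ∀ k ∈ A, ∀ l ∈ A.erase k, _ := fun k hk l hl ↦
    cubicPairing_add_single_add_single (w := w) (e := e) hk (Finset.mem_of_mem_erase hl)
      (Finset.ne_of_mem_erase hl).symm h2 h2'
  rw [Finset.sum_congr rfl hdiag,
    Finset.sum_congr rfl fun k hk ↦ Finset.sum_congr rfl (hoff k hk)]
  split_ifs with hy
  · simp only [add_mul, Finset.sum_add_distrib]
    rw [sum_sum_cubicSign_eq_zero hw hA hm' heven' hy, zero_add,
      Finset.sum_comm' (t' := A) (s' := fun l ↦ A.erase l)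
        fun k l ↦ by simp only [Finset.mem_erase]; tauto]
    simp only [Finset.erase_right_comm (s := A)]
    exact sum_sum_cubicSign_eq_zero hw hA hm heven (by omega)
  · simp

lemma cubicPairing_add_single_of_linear (hp : p ∈ A) (hk : k ∈ A) (hkp : k ≠ p)
    (hep : e p = (3, 0)) (hm : 2 ≤ bideg m) :
    cubicPairing A w (e + Pi.single k m) =
      if ∑ i ∈ A, ((e + Pi.single k m : ι → ℕ × ℕ) i).2 = w then
        ((if e k + m = (3, 0) then 1 else 0) + cubicSign (e k + m)) *
          linearWeight ((A.erase p).erase k) e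
      else 0 := by
  set E := e + Pi.single k m
  have hEk : E k = e k + m := by simp [E]
  have hEp : E p = (3, 0) := by simp [E, hkp.symm, hep]
  have hrest : linearWeight ((A.erase p).erase k) E = linearWeight ((A.erase p).erase k) e :=
    linearWeight_congr fun i hi ↦ by simp [E, Finset.ne_of_mem_erase hi]
  rw [cubicPairing_eq_of_two_le hk hp hkp (by rw [hEk, map_add]; omega) (by rw [hEp]; decide),
    pairWeight, pairWeight, Finset.erase_right_comm (a := k), hrest, hEk, hEp]
  simp [cubicSign, bideg_apply, add_mul]

lemma sum_ite_add_eq_mul_linearWeight_erase (h : ∀ i ∈ B, bideg (e i) = 1) (hm : bideg m = 1)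
    (hx : ∑ i ∈ B, (e i).1 ≠ 0) :
    ∑ k ∈ B, (if e k + (m + (1, 0)) = (3, 0) then 1 else 0) * linearWeight (B.erase k) e =
      if m = (1, 0) then linearWeight B e else 0 := by
  rcases eq_of_bideg_eq_one hm with rfl | rfl
  · rw [if_pos rfl, ← sum_fst_mul_linearWeight_erase h hx]
    refine Finset.sum_congr rfl fun k hk ↦ ?_
    rcases eq_of_bideg_eq_one (h k hk) with hk | hk <;> simp [hk]
  · refine Finset.sum_eq_zero fun k hk ↦ ?_
    rcases eq_of_bideg_eq_one (h k hk) with hk | hk <;> simp [hk]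

variable [Fintype ι]

/-- The extension of `cubicPairing (univ.erase i) w` to a functional on the polynomials in all
sites. The exponents at the distinguished site `i` are eliminated by pretending that the power sums
of positive even degree vanish, and odd exponents at `i` are sent to `0`. -/
def extendedPairing (i : ι) (w : ℕ) (e : ι → ℕ × ℕ) : ℤ :=
  if e i = 0 then cubicPairing (Finset.univ.erase i) w e
  else if Even (bideg (e i)) then
    -∑ k ∈ Finset.univ.erase i, cubicPairing (Finset.univ.erase i) w (e + Pi.single k (e i))
  else 0

lemma extendedPairing_of_eq_zero (h : e i = 0) :
    extendedPairing i w e = cubicPairing (Finset.univ.erase i) w e :=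
  if_pos h

lemma extendedPairing_of_even (h : e i ≠ 0) (heven : Even (bideg (e i))) :
    extendedPairing i w e =
      -∑ k ∈ Finset.univ.erase i, cubicPairing (Finset.univ.erase i) w (e + Pi.single k (e i)) := by
  rw [extendedPairing, if_neg h, if_pos heven]

lemma extendedPairing_of_odd (hodd : Odd (bideg (e i))) : extendedPairing i w e = 0 := by
  have h : e i ≠ 0 := by intro h; simp [h] at hodd
  rw [extendedPairing, if_neg h, if_neg (Nat.not_even_iff_odd.2 hodd)]

theorem sum_extendedPairing_add_single (i : ι) (hw : 3 ≤ w) (hι : w + 3 ≤ Fintype.card ι)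
    (e : ι → ℕ × ℕ) (hm : m ≠ 0) (heven : Even (bideg m)) :
    ∑ k, extendedPairing i w (e + Pi.single k m) = 0 := by
  set A := Finset.univ.erase i with hA
  have hi : (e + Pi.single i m : ι → ℕ × ℕ) i = e i + m := by simp
  have hk : ∀ k ∈ A, (e + Pi.single k m : ι → ℕ × ℕ) i = e i := fun k hk ↦ by
    simp [(Finset.ne_of_mem_erase hk).symm]
  rw [← Finset.add_sum_erase Finset.univ _ (Finset.mem_univ i), ← hA]
  obtain hev | hodd := Nat.even_or_odd (bideg (e i))
  · have hev_add : Even (bideg ((e + Pi.single i m : ι → ℕ × ℕ) i)) := by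
      rw [hi, map_add]; exact hev.add heven
    have hne : (e + Pi.single i m : ι → ℕ × ℕ) i ≠ 0 := by
      rw [hi]; exact fun h ↦ hm (add_eq_zero.1 h).2
    rw [extendedPairing_of_even hne hev_add, hi, ← hA]
    obtain hz | hz := eq_or_ne (e i) 0
    · rw [hz, zero_add, neg_add_eq_zero]
      refine Finset.sum_congr rfl fun k hkA ↦ ?_
      rw [extendedPairing_of_eq_zero ((hk k hkA).trans hz)]
      refine cubicPairing_congr fun j hj ↦ ?_
      simp [Finset.ne_of_mem_erase hj]
    · have hcard : w + 2 ≤ A.card := by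
        rw [hA, Finset.card_erase_of_mem (Finset.mem_univ i), Finset.card_univ]; omega
      have hterm : ∀ k ∈ A, extendedPairing i w (e + Pi.single k m) =
          -∑ l ∈ A, cubicPairing A w (e + Pi.single k m + Pi.single l (e i)) := fun k hkA ↦ by
        rw [extendedPairing_of_even (by rwa [hk k hkA]) (by rwa [hk k hkA]), hk k hkA]
      rw [Finset.sum_congr rfl hterm, Finset.sum_neg_distrib,
        sum_sum_cubicPairing_eq_zero hw hcard e hm heven hz hev, neg_zero, add_zero, neg_eq_zero]
      refine Finset.sum_eq_zero fun k hkA ↦ cubicPairing_eq_zero_of_four_le hkA ?_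
      have h2 := two_le_bideg hm heven
      have h2' := two_le_bideg hz hev
      simp only [Pi.add_apply, Pi.single_eq_same, map_add]
      omega
  · rw [extendedPairing_of_odd (by rw [hi, map_add]; exact hodd.add_even heven), zero_add]
    exact Finset.sum_eq_zero fun k hk' ↦ extendedPairing_of_odd (by rwa [hk k hk'])

lemma extendedPairing_add_single_self_of_odd (w : ℕ) (hodd : Odd (bideg (e i))) :
    extendedPairing i w (e + Pi.single i (1, 0)) =
      -∑ k ∈ Finset.univ.erase i,
        cubicPairing (Finset.univ.erase i) w (e + Pi.single k (e i + (1, 0))) := by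
  have hi : (e + Pi.single i (1, 0) : ι → ℕ × ℕ) i = e i + (1, 0) := by simp
  rw [extendedPairing_of_even, hi]
  · refine congrArg _ (Finset.sum_congr rfl fun k _ ↦ cubicPairing_congr fun j hj ↦ ?_)
    simp [Finset.ne_of_mem_erase hj]
  · rw [hi]
    exact fun h ↦ one_ne_zero (congrArg Prod.fst (add_eq_zero.1 h).2)
  · rw [hi, map_add]
    exact hodd.add_odd odd_one

lemma sum_snd_erase_add_single (e : ι → ℕ × ℕ) (hk : k ∈ Finset.univ.erase i) :
    ∑ j ∈ Finset.univ.erase i, ((e + Pi.single k (e i + (1, 0)) : ι → ℕ × ℕ) j).2 =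
      ∑ j, (e j).2 := by
  rw [← AddMonoidHom.coe_snd, sum_map_add_single _ _ hk,
    ← Finset.sum_erase_add _ _ (Finset.mem_univ i)]
  rfl

lemma extendedPairing_add_single_self_eq_zero_of_ne (hodd : Odd (bideg (e i)))
    (hy : ∑ j, (e j).2 ≠ w) : extendedPairing i w (e + Pi.single i (1, 0)) = 0 := by
  rw [extendedPairing_add_single_self_of_odd w hodd, neg_eq_zero]
  exact Finset.sum_eq_zero fun k hk ↦ cubicPairing_eq_zero (by rwa [sum_snd_erase_add_single e hk])

lemma extendedPairing_add_single_self_eq_zero_of_cubic (h : e i = (3, 0)) :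
    extendedPairing i w (e + Pi.single i (1, 0)) = 0 := by
  rw [extendedPairing_add_single_self_of_odd w (by rw [h]; decide), neg_eq_zero]
  refine Finset.sum_eq_zero fun k hk ↦ cubicPairing_eq_zero_of_four_le hk ?_
  have h4 : bideg ((3, 0) + (1, 0)) = 4 := rfl
  rw [Pi.add_apply, Pi.single_eq_same, map_add, h, h4]
  omega

lemma extendedPairing_add_single_self_of_linear (hw : 3 ≤ w) (hι : w + 3 ≤ Fintype.card ι)
    (hpi : p ≠ i) (hep : e p = (3, 0)) (hlin : ∀ j, j ≠ p → bideg (e j) = 1)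
    (hy : ∑ j, (e j).2 = w) :
    extendedPairing i w (e + Pi.single i (1, 0)) =
      if e i = (1, 0) then -linearWeight ((Finset.univ.erase i).erase p) e else 0 := by
  set A := Finset.univ.erase i with hA
  have hpA : p ∈ A := by simp [hA, hpi]
  have hei : bideg (e i) = 1 := hlin i hpi.symm
  have hBlin : ∀ j ∈ A.erase p, bideg (e j) = 1 := fun j hj ↦ hlin j (Finset.ne_of_mem_erase hj)
  have hm2 : bideg (e i + (1, 0)) = 2 := by rw [map_add, hei]; rfl
  obtain ⟨hx0, hy0⟩ : ∑ j ∈ A.erase p, (e j).1 ≠ 0 ∧ ∑ j ∈ A.erase p, (e j).2 ≠ 0 := by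
    have hyi := Finset.add_sum_erase Finset.univ (fun j ↦ (e j).2) (Finset.mem_univ i)
    have hyp := Finset.add_sum_erase A (fun j ↦ (e j).2) hpA
    have hcard : ∑ j ∈ A.erase p, (e j).1 + ∑ j ∈ A.erase p, (e j).2 = (A.erase p).card := by
      rw [← Finset.sum_add_distrib, Finset.card_eq_sum_ones]
      exact Finset.sum_congr rfl hBlin
    rw [Finset.card_erase_of_mem hpA, hA, Finset.card_erase_of_mem (Finset.mem_univ i),
      Finset.card_univ, ← hA] at hcard
    simp only [hep, ← hA] at hyi hyp
    rw [bideg_apply] at hei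
    omega
  have hterm : ∀ k ∈ A.erase p, cubicPairing A w (e + Pi.single k (e i + (1, 0))) =
      ((if e k + (e i + (1, 0)) = (3, 0) then 1 else 0) + cubicSign (e k + (e i + (1, 0)))) *
        linearWeight ((A.erase p).erase k) e := fun k hk ↦ by
    obtain ⟨hkp, hkA⟩ := Finset.mem_erase.1 hk
    rw [cubicPairing_add_single_of_linear hpA hkA hkp hep hm2.ge, hA,
      sum_snd_erase_add_single e hkA, if_pos hy]
  rw [extendedPairing_add_single_self_of_odd w (by rw [hei]; decide), ← hA,
    ← Finset.add_sum_erase A _ hpA, cubicPairing_eq_zero_of_four_le hpA, zero_add,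
    Finset.sum_congr rfl hterm]
  · simp only [add_mul, Finset.sum_add_distrib]
    rw [sum_cubicSign_add_mul_linearWeight_erase (fun h ↦ by simp [h] at hm2) (hm2 ▸ even_two)
      fun _ _ ↦ ⟨hx0, hy0⟩, add_zero, sum_ite_add_eq_mul_linearWeight_erase hBlin hei hx0]
    split_ifs <;> simp
  · rw [Pi.add_apply, Pi.single_eq_same, map_add, hep, hm2]
    decide

end CubicPairing

section ExtraElements

variable {n : ℕ}

/-- The linear functional on `DiagonalRing n` with value `extendedPairing i w e` on `mon e`. -/
noncomputable def pairingFunctional (i : Fin n) (w : ℕ) : DiagonalRing n →ₗ[ℂ] ℂ :=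
  (monBasis n).constr ℂ fun e ↦ (extendedPairing i w e : ℂ)

lemma pairingFunctional_mon (i : Fin n) (w : ℕ) (e : Fin n → ℕ × ℕ) :
    pairingFunctional i w (mon e) = extendedPairing i w e := by
  rw [← monBasis_apply, pairingFunctional, Module.Basis.constr_basis]

theorem pairingFunctional_eq_zero_of_mem {w : ℕ} (i : Fin n) (hw : 3 ≤ w) (hwn : w + 3 ≤ n)
    {f : DiagonalRing n} (hf : f ∈ evenPowerSumIdeal n) : pairingFunctional i w f = 0 := by
  suffices ∀ g, pairingFunctional i w (g * f) = 0 by simpa using this 1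
  induction hf using Submodule.span_induction with
  | mem f hf =>
    obtain ⟨m, hm, heven, rfl⟩ := hf
    suffices pairingFunctional i w ∘ₗ LinearMap.mulRight ℂ (polarizedPowerSum n m) = 0 from
      LinearMap.congr_fun this
    refine (monBasis n).ext fun e ↦ ?_
    rw [LinearMap.comp_apply, LinearMap.mulRight_apply, monBasis_apply, mul_comm,
      polarizedPowerSum_mul_mon, map_sum, LinearMap.zero_apply]
    simp only [pairingFunctional_mon]
    exact_mod_cast sum_extendedPairing_add_single i hw (by simpa) e hm heven
  | zero => simp
  | add f g _ _ hf hg => exact fun h ↦ by rw [mul_add, map_add, hf, hg, add_zero]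
  | smul a f _ hf => exact fun h ↦ by rw [smul_eq_mul, ← mul_assoc, hf]

/-- The exponents of the monomial `x₀ ^ 3 * y₁ ⋯ y_w * x_{w+1} ⋯ x_{n-1}`. -/
def leadingExponent (n w : ℕ) (j : Fin n) : ℕ × ℕ :=
  if (j : ℕ) = 0 then (3, 0) else if (j : ℕ) ≤ w then (0, 1) else (1, 0)

/-- The symmetrization of the monomial `x₀ ^ 3 * y₁ ⋯ y_w * x_{w+1} ⋯ x_{n-1}`. -/
noncomputable def symmetricCubic (n w : ℕ) : DiagonalRing n :=
  symmetrize n (mon (leadingExponent n w))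

lemma odd_bideg_leadingExponent (w : ℕ) (j : Fin n) : Odd (bideg (leadingExponent n w j)) := by
  unfold leadingExponent
  split_ifs <;> decide

lemma sum_snd_leadingExponent {w : ℕ} (hw : w < n) : ∑ j, (leadingExponent n w j).2 = w := by
  have hsnd : ∀ j : Fin n, (leadingExponent n w j).2 =
      if (j : ℕ) ∈ Finset.Icc 1 w then 1 else 0 := fun j ↦ by
    unfold leadingExponent
    split_ifs <;> simp only [Finset.mem_Icc] at * <;> omega
  have hsub : Finset.Icc 1 w ⊆ Finset.range n := fun j hj ↦ by
    simp only [Finset.mem_Icc, Finset.mem_range] at hj ⊢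
    omega
  rw [Fintype.sum_congr _ _ hsnd,
    Fin.sum_univ_eq_sum_range (fun j ↦ if j ∈ Finset.Icc 1 w then 1 else 0) n,
    Finset.sum_ite_mem, Finset.inter_eq_right.2 hsub]
  simp

lemma sum_snd_leadingExponent_comp {w : ℕ} (hw : w < n) (σ : Equiv.Perm (Fin n)) :
    ∑ j, ((leadingExponent n w ∘ σ) j).2 = w :=
  (Equiv.sum_comp σ fun j ↦ (leadingExponent n w j).2).trans (sum_snd_leadingExponent hw)

lemma pairingFunctional_X_mul_symmetricCubic (i k : Fin n) (w w' : ℕ) :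
    pairingFunctional i w (X (Sum.inl k) * symmetricCubic n w') =
      ((∑ σ : Equiv.Perm (Fin n),
        extendedPairing i w (leadingExponent n w' ∘ σ + Pi.single k (1, 0)) : ℤ) : ℂ) := by
  simp only [symmetricCubic, symmetrize_mon, X_inl_eq_mon, mul_comm (mon (Pi.single k _)),
    Finset.sum_mul, ← mon_add, map_sum, pairingFunctional_mon, Int.cast_sum]

lemma pairingFunctional_X_mul_symmetricCubic_eq_zero {i k : Fin n} {w w' : ℕ} (hwn : w' < n)
    (h : k ≠ i ∨ w' ≠ w) :
    pairingFunctional i w (X (Sum.inl k) * symmetricCubic n w') = 0 := by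
  rw [pairingFunctional_X_mul_symmetricCubic, Int.cast_eq_zero]
  refine Finset.sum_eq_zero fun σ _ ↦ ?_
  have hodd := odd_bideg_leadingExponent w' (σ i)
  obtain rfl | hki := eq_or_ne k i
  · refine extendedPairing_add_single_self_eq_zero_of_ne hodd ?_
    rw [sum_snd_leadingExponent_comp hwn]
    exact h.resolve_left (by simp)
  · refine extendedPairing_of_odd ?_
    simpa [hki.symm] using hodd

lemma extendedPairing_leadingExponent {i : Fin n} {w : ℕ} (hw : 3 ≤ w) (hwn : w + 3 ≤ n)
    (σ : Equiv.Perm (Fin n)) :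
    ∃ c : ℤ, 0 < c ∧ extendedPairing i w (leadingExponent n w ∘ σ + Pi.single i (1, 0)) =
      if w < σ i then -c else 0 := by
  set e := leadingExponent n w ∘ σ with he
  set p := σ.symm ⟨0, by omega⟩ with hp
  have hσp : (σ p : ℕ) = 0 := by simp [hp]
  have hep : e p = (3, 0) := if_pos hσp
  have hei : e i = (1, 0) ↔ w < σ i := by
    simp only [he, leadingExponent, Function.comp_apply]
    split_ifs <;> simp only [Prod.mk.injEq, true_iff] <;> omega
  obtain hpi | hpi := eq_or_ne p i
  · refine ⟨1, one_pos, ?_⟩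
    rw [extendedPairing_add_single_self_eq_zero_of_cubic (hpi ▸ hep), if_neg (by rw [← hpi]; omega)]
  · have hlin : ∀ j ≠ p, bideg (e j) = 1 := fun j hj ↦ by
      have hσj : (σ j : ℕ) ≠ 0 := fun h ↦ hj (σ.injective (Fin.ext (h.trans hσp.symm)))
      simp only [he, leadingExponent, Function.comp_apply, if_neg hσj]
      split_ifs <;> rfl
    refine ⟨linearWeight ((Finset.univ.erase i).erase p) e, ?_, ?_⟩
    · rw [linearWeight_of_bideg_eq_one fun j hj ↦ hlin j (Finset.ne_of_mem_erase hj)]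
      positivity
    · rw [extendedPairing_add_single_self_of_linear hw (by simpa) hpi hep hlin
        (sum_snd_leadingExponent_comp (by omega) σ)]
      simp only [hei]

lemma pairingFunctional_X_mul_symmetricCubic_ne_zero {w : ℕ} (i : Fin n) (hw : 3 ≤ w)
    (hwn : w + 3 ≤ n) :
    pairingFunctional i w (X (Sum.inl i) * symmetricCubic n w) ≠ 0 := by
  rw [pairingFunctional_X_mul_symmetricCubic, Int.cast_ne_zero]
  refine (Finset.sum_neg' (fun σ _ ↦ ?_)
    ⟨Equiv.swap i ⟨n - 1, by omega⟩, Finset.mem_univ _, ?_⟩).ne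
  · obtain ⟨c, hc, h⟩ := extendedPairing_leadingExponent (i := i) hw hwn σ
    rw [h]
    split_ifs <;> omega
  · obtain ⟨c, hc, h⟩ :=
      extendedPairing_leadingExponent (i := i) hw hwn (Equiv.swap i ⟨n - 1, by omega⟩)
    rw [h, Equiv.swap_apply_left, if_pos (by simp only; omega)]
    omega

end ExtraElements

section SymbolIdeal

variable {K σ L : Type*} [CommRing K] [AddCommGroup L] [Module K L]
  {ρ : MvPolynomial σ K →ₗ[K] L} {f : MvPolynomial σ K} {d d' : ℕ}

lemma homogeneousComponent_succ_X_mul (v : σ) (d : ℕ) (f : MvPolynomial σ K) :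
    homogeneousComponent (d + 1) (X v * f) = X v * homogeneousComponent d f := by
  classical
  ext s
  simp only [coeff_homogeneousComponent, coeff_X_mul']
  by_cases hv : v ∈ s.support
  · have hle : Finsupp.single v 1 ≤ s := by
      simpa [Nat.one_le_iff_ne_zero] using hv
    obtain ⟨t, rfl⟩ := exists_add_of_le hle
    simp [add_comm 1]
  · simp [hv]

lemma homogeneousComponent_zero_X_mul (v : σ) (f : MvPolynomial σ K) :
    homogeneousComponent 0 (X v * f) = 0 := by
  simp [homogeneousComponent_zero, ← constantCoeff_eq]

variable (K σ) in
/-- The polynomials of total degree less than `d`. -/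
noncomputable def degreeLT (d : ℕ) : Submodule K (MvPolynomial σ K) :=
  restrictSupport K {s | s.degree < d}

lemma degreeLT_mono (h : d ≤ d') : degreeLT K σ d ≤ degreeLT K σ d' :=
  restrictSupport_mono K fun _ hs ↦ lt_of_lt_of_le hs h

lemma degreeLT_eq_span (d : ℕ) :
    degreeLT K σ d = Submodule.span K ((monomial · 1) '' {s : σ →₀ ℕ | s.degree < d}) :=
  restrictSupport_eq_span K _

lemma mem_degreeLT_of_isHomogeneous (hf : f.IsHomogeneous d) (h : d < d') :
    f ∈ degreeLT K σ d' := by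
  refine (mem_restrictSupport_iff K).2 fun s hs ↦ ?_
  have hsd : s.degree = d := by_contra fun hsd ↦ mem_support_iff.1 hs (hf.coeff_eq_zero hsd)
  exact hsd.trans_lt h

lemma homogeneousComponent_mem_degreeLT (d : ℕ) (f : MvPolynomial σ K) :
    homogeneousComponent d f ∈ degreeLT K σ (d + 1) :=
  mem_degreeLT_of_isHomogeneous (homogeneousComponent_isHomogeneous d f) d.lt_succ_self

lemma X_mul_mem_degreeLT (v : σ) (hf : f ∈ degreeLT K σ d) : X v * f ∈ degreeLT K σ (d + 1) := by
  classical
  refine (mem_restrictSupport_iff K).2 fun s hs ↦ ?_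
  simp only [support_X_mul, Finset.coe_map, Set.mem_image] at hs
  obtain ⟨t, ht, rfl⟩ := hs
  have := (mem_restrictSupport_iff K).1 hf ht
  simp_all [add_comm 1]

lemma homogeneousComponent_mem_restrictSupport {S : Set (σ →₀ ℕ)} (hf : f ∈ restrictSupport K S)
    (d : ℕ) : homogeneousComponent d f ∈ restrictSupport K S := by
  classical
  refine (mem_restrictSupport_iff K).2 fun s hs ↦ (mem_restrictSupport_iff K).1 hf ?_
  rw [Finset.mem_coe, support_homogeneousComponent] at hs
  exact (Finset.mem_filter.1 hs).1

/-- Filtered quotients of the polynomial ring, up to lower order terms: `ρ` intertwines the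
multiplication by each variable with an endomorphism of `L`, up to terms of smaller degree. -/
def IsFiltered (ρ : MvPolynomial σ K →ₗ[K] L) : Prop :=
  ∀ v, ∃ M : L →ₗ[K] L, ∀ d, ∀ f ∈ degreeLT K σ d, ρ (X v * f) - M (ρ f) ∈ (degreeLT K σ d).map ρ

/-- The polynomials all of whose homogeneous components become of smaller degree under `ρ`. The
quotient by this ideal is the associated graded module of `L` for the filtration by the images of
`degreeLT`. -/
def symbolIdeal (ρ : MvPolynomial σ K →ₗ[K] L) (hρ : IsFiltered ρ) : Ideal (MvPolynomial σ K) where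
  carrier := {f | ∀ d, ρ (homogeneousComponent d f) ∈ (degreeLT K σ d).map ρ}
  zero_mem' d := by simp
  add_mem' hf hg d := by
    rw [map_add, map_add]
    exact add_mem (hf d) (hg d)
  smul_mem' c f hf := by
    induction c using MvPolynomial.induction_on with
    | C a =>
      intro d
      rw [smul_eq_mul, homogeneousComponent_C_mul, ← smul_eq_C_mul, map_smul]
      exact Submodule.smul_mem _ _ (hf d)
    | add p q hp hq =>
      intro d
      rw [add_smul, map_add, map_add]
      exact add_mem (hp d) (hq d)
    | mul_X p v hp =>
      rw [smul_eq_mul, mul_comm p, mul_assoc, ← smul_eq_mul p]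
      rintro (_ | d)
      · rw [homogeneousComponent_zero_X_mul, map_zero]
        exact zero_mem _
      · obtain ⟨M, hM⟩ := hρ v
        obtain ⟨g, hg, hgp⟩ := hp d
        have hp' := hM _ _ (homogeneousComponent_mem_degreeLT d (p • f))
        have hg' := Submodule.map_mono (degreeLT_mono d.le_succ) (hM d g hg)
        have hXg := Submodule.mem_map_of_mem (f := ρ) (X_mul_mem_degreeLT v hg)
        rw [homogeneousComponent_succ_X_mul]
        rw [hgp] at hg'
        simpa using add_mem (sub_mem hp' hg') hXg

lemma mem_symbolIdeal_of_isHomogeneous {hρ : IsFiltered ρ} (hf : f.IsHomogeneous d)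
    (h : ρ f ∈ (degreeLT K σ d).map ρ) : f ∈ symbolIdeal ρ hρ := by
  intro d'
  rw [homogeneousComponent_of_mem ((mem_homogeneousSubmodule d f).2 hf)]
  split_ifs with hd
  · exact hd ▸ h
  · rw [map_zero]
    exact zero_mem _

lemma map_restrictSupport_eq_top {hρ : IsFiltered ρ} (hsurj : Function.Surjective ρ)
    {S : Set (σ →₀ ℕ)} (hS : restrictSupport K S ⊔ (symbolIdeal ρ hρ).restrictScalars K = ⊤) :
    (restrictSupport K S).map ρ = ⊤ := by
  have hdegree : ∀ d, (degreeLT K σ d).map ρ ≤ (restrictSupport K S).map ρ := by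
    intro d
    induction d using Nat.strong_induction_on with
    | _ d ih =>
    rw [degreeLT_eq_span, Submodule.map_span, Submodule.span_le]
    rintro _ ⟨_, ⟨s, hs, rfl⟩, rfl⟩
    obtain ⟨c, hc, j, hj, hcj⟩ := Submodule.mem_sup.1 (hS ▸ Submodule.mem_top (x := monomial s 1))
    have hcomp : homogeneousComponent s.degree (monomial s (1 : K)) = monomial s 1 :=
      homogeneousComponent_eq_self (isHomogeneous_monomial 1 rfl)
    change ρ (monomial s 1) ∈ _
    rw [← hcomp, ← hcj, map_add, map_add]
    exact add_mem (Submodule.mem_map_of_mem (homogeneousComponent_mem_restrictSupport hc _))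
      (ih _ hs (hj _))
  rw [eq_top_iff, ← LinearMap.range_eq_top.2 hsurj]
  rintro _ ⟨f, rfl⟩
  refine hdegree (f.totalDegree + 1) (Submodule.mem_map_of_mem ((mem_restrictSupport_iff K).2 ?_))
  exact fun s hs ↦ Nat.lt_succ_of_le (le_totalDegree hs)

theorem finrank_le_finrank_quotient_symbolIdeal {K σ L : Type*} [Field K] [AddCommGroup L]
    [Module K L] {ρ : MvPolynomial σ K →ₗ[K] L} (hρ : IsFiltered ρ) (hsurj : Function.Surjective ρ)
    [Module.Finite K (MvPolynomial σ K ⧸ symbolIdeal ρ hρ)] :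
    Module.finrank K L ≤ Module.finrank K (MvPolynomial σ K ⧸ symbolIdeal ρ hρ) := by
  set π := (Ideal.Quotient.mkₐ K (symbolIdeal ρ hρ)).toLinearMap
  obtain ⟨S, -, -, hspan, hli⟩ := exists_linearIndepOn_extension
    (linearIndepOn_empty K fun s ↦ π (monomial s 1)) (Set.empty_subset Set.univ)
  have hrange : π.range = ⊤ := LinearMap.range_eq_top.2 (Ideal.Quotient.mkₐ_surjective K _)
  have hker : π.ker = (symbolIdeal ρ hρ).restrictScalars K :=
    Submodule.ext fun f ↦ Ideal.Quotient.eq_zero_iff_mem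
  have hS : restrictSupport K S ⊔ (symbolIdeal ρ hρ).restrictScalars K = ⊤ := by
    rw [← hker, ← LinearMap.map_eq_top_iff hrange, eq_top_iff, ← hrange, LinearMap.range_eq_map,
      ← restrictSupport_univ, restrictSupport_eq_span, restrictSupport_eq_span, Submodule.map_span,
      Submodule.map_span, Submodule.span_le, Set.image_image, Set.image_image]
    exact hspan
  have := hli.finite
  have := Fintype.ofFinite S
  calc Module.finrank K L
    _ = Module.finrank K ((restrictSupport K S).map ρ) := by
      rw [map_restrictSupport_eq_top hsurj hS, finrank_top]
    _ ≤ Fintype.card S := by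
      rw [restrictSupport_eq_span, Submodule.map_span, Set.image_image, Set.image_eq_range]
      exact finrank_range_le_card _
    _ ≤ Module.finrank K (MvPolynomial σ K ⧸ symbolIdeal ρ hρ) := hli.fintype_card_le_finrank

end SymbolIdeal

section Alternating

variable {K α : Type*} {n : ℕ} [CommRing K]

variable (K α n) in
/-- The functions of `n` arguments that change by the sign under permutations of the arguments. -/
def alternatingFunctions : Submodule K ((Fin n → α) → K) where
  carrier := {u | ∀ (σ : Equiv.Perm (Fin n)) κ, u (κ ∘ σ) = (Equiv.Perm.sign σ : ℤ) * u κ}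
  zero_mem' σ κ := by simp
  add_mem' hu hv σ κ := by rw [Pi.add_apply, Pi.add_apply, hu, hv, mul_add]
  smul_mem' c u hu σ κ := by rw [Pi.smul_apply, Pi.smul_apply, hu, mul_smul_comm]

lemma eq_zero_of_mem_alternatingFunctions [NoZeroDivisors K] [NeZero (2 : K)] {u : (Fin n → α) → K}
    (hu : u ∈ alternatingFunctions K α n) {κ : Fin n → α} (hκ : ¬ Function.Injective κ) :
    u κ = 0 := by
  simp only [Function.Injective, not_forall] at hκ
  obtain ⟨i, j, hij, hne⟩ := hκ
  have h := hu (Equiv.swap i j) κ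
  rw [Equiv.comp_swap_eq_update, hij, Function.update_eq_self, ← hij, Function.update_eq_self,
    Equiv.Perm.sign_swap hne, Units.val_neg, Units.val_one, Int.cast_neg, Int.cast_one] at h
  have h2 : 2 * u κ = 0 := by linear_combination h
  exact (mul_eq_zero.1 h2).resolve_left two_ne_zero

lemma alternatingFunctions_ext [NoZeroDivisors K] [NeZero (2 : K)] [LinearOrder α]
    {u v : (Fin n → α) → K}
    (hu : u ∈ alternatingFunctions K α n) (hv : v ∈ alternatingFunctions K α n)
    (h : ∀ κ, StrictMono κ → u κ = v κ) : u = v := by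
  ext κ
  by_cases hκ : Function.Injective κ
  · have hsort := h (κ ∘ Tuple.sort κ)
      ((Tuple.monotone_sort κ).strictMono_of_injective (hκ.comp (Tuple.sort κ).injective))
    rw [hu, hv] at hsort
    rcases Int.units_eq_one_or (Equiv.Perm.sign (Tuple.sort κ)) with h | h <;>
      simpa [h] using hsort
  · rw [eq_zero_of_mem_alternatingFunctions hu hκ, eq_zero_of_mem_alternatingFunctions hv hκ]

/-- The increasing tuple `1, 3, …, 2 * n - 1`. -/
def oddTuple (n : ℕ) (i : Fin n) : Fin (2 * n + 1) := ⟨2 * i + 1, by omega⟩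

/-- The increasing tuple `0, 2, …, 2 * n` with the entry `2 * k` left out. -/
def evenTuple (n : ℕ) (k : Fin (n + 1)) (i : Fin n) : Fin (2 * n + 1) :=
  ⟨2 * k.succAbove i, by omega⟩

lemma exists_strictMono_eq_two_mul_add {N M r : ℕ} {κ : Fin n → Fin N} (hκ : StrictMono κ)
    (hr : ∀ i, (κ i : ℕ) % 2 = r) (hN : N ≤ 2 * M + r) :
    ∃ s : Fin n → Fin M, StrictMono s ∧ ∀ i, (κ i : ℕ) = 2 * s i + r := by
  refine ⟨fun i ↦ ⟨κ i / 2, by have := hr i; omega⟩, fun i j hij ↦ ?_, fun i ↦ ?_⟩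
  · have hlt := hκ hij
    have hi := hr i
    have hj := hr j
    simp only [Fin.lt_def] at hlt ⊢
    omega
  · have hi := hr i
    dsimp only
    omega

lemma eq_oddTuple {κ : Fin n → Fin (2 * n + 1)} (hκ : StrictMono κ)
    (hodd : ∀ i, Odd (κ i : ℕ)) : κ = oddTuple n := by
  obtain ⟨s, hs, hκs⟩ := exists_strictMono_eq_two_mul_add hκ
    (fun i ↦ Nat.odd_iff.1 (hodd i)) le_rfl
  obtain rfl : s = id := hs.range_inj strictMono_id |>.1 <| by
    rw [Set.range_id, Set.range_eq_univ]
    exact Finite.surjective_of_injective hs.injective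
  exact funext fun i ↦ Fin.ext (hκs i)

lemma exists_eq_succAbove {s : Fin n → Fin (n + 1)} (hs : StrictMono s) :
    ∃ k : Fin (n + 1), s = k.succAbove := by
  have hcard : (Finset.univ.image s)ᶜ.card = 1 := by
    rw [Finset.card_compl, Finset.card_image_of_injective _ hs.injective]
    simp
  obtain ⟨k, hk⟩ := Finset.card_eq_one.1 hcard
  refine ⟨k, (hs.range_inj (Fin.strictMono_succAbove k)).1 ?_⟩
  rw [Fin.range_succAbove, ← Finset.coe_singleton, ← hk]
  simp

lemma exists_eq_evenTuple {κ : Fin n → Fin (2 * n + 1)} (hκ : StrictMono κ)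
    (heven : ∀ i, Even (κ i : ℕ)) : ∃ k, κ = evenTuple n k := by
  obtain ⟨s, hs, hκs⟩ := exists_strictMono_eq_two_mul_add (M := n + 1) hκ
    (fun i ↦ Nat.even_iff.1 (heven i)) (by omega)
  obtain ⟨k, rfl⟩ := exists_eq_succAbove hs
  exact ⟨k, funext fun i ↦ Fin.ext (hκs i)⟩

end Alternating

section RowDet

variable {K α ι : Type*}

lemma multilinearMap_mem_of_span_eq_top {E F : Type*} [Finite ι] [Field K] [AddCommGroup E]
    [Module K E] [AddCommGroup F] [Module K F] (T : MultilinearMap K (fun _ : ι ↦ E) F) {S : Set E}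
    (hS : Submodule.span K S = ⊤) {p : Submodule K F} (hp : ∀ P, (∀ i, P i ∈ S) → T P ∈ p)
    (P : ι → E) : T P ∈ p := by
  let b := Module.Basis.ofSpan hS.ge
  have hT : p.mkQ.compMultilinearMap T = 0 := by
    refine Module.Basis.ext_multilinear (fun _ ↦ b) fun v ↦ ?_
    exact (Submodule.Quotient.mk_eq_zero p).2
      (hp _ fun i ↦ Module.Basis.ofSpan_subset hS.ge ⟨v i, rfl⟩)
  exact (Submodule.Quotient.mk_eq_zero p).1 (congrArg (· P) hT)

variable [Fintype ι] [DecidableEq ι] [CommRing K]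

/-- The multilinear map sending a family of matrices `P` to the function whose value at `κ` is the
determinant of the matrix with `i`-th row the row `κ i` of `P i`. -/
noncomputable def rowDet : MultilinearMap K (fun _ : ι ↦ Matrix α ι K) ((ι → α) → K) :=
  MultilinearMap.pi fun κ ↦
    Matrix.detRowAlternating.toMultilinearMap.compLinearMap fun i ↦ LinearMap.proj (κ i)

lemma rowDet_apply (P : ι → Matrix α ι K) (κ : ι → α) :
    rowDet P κ = (Matrix.of fun i ↦ P i (κ i)).det := rfl

lemma rowDet_comp_perm (P : ι → Matrix α ι K) (κ : ι → α) (σ : Equiv.Perm ι) :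
    rowDet (P ∘ σ) (κ ∘ σ) = (Equiv.Perm.sign σ : ℤ) * rowDet P κ :=
  Matrix.det_permute σ (Matrix.of fun i ↦ P i (κ i))

lemma rowDet_eq_zero_of_row {P : ι → Matrix α ι K} {κ : ι → α} {i : ι} (h : P i (κ i) = 0) :
    rowDet P κ = 0 :=
  Matrix.det_eq_zero_of_row_eq_zero i fun j ↦ congrFun h j

lemma rowDet_single [DecidableEq α] (κ : ι → α) :
    rowDet (fun i ↦ Matrix.single (κ i) i (1 : K)) = Pi.single κ 1 := by
  ext κ'
  have hdiag : (Matrix.of fun i ↦ Matrix.single (κ i) i (1 : K) (κ' i)) =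
      Matrix.diagonal fun i ↦ if κ i = κ' i then 1 else 0 := by
    ext i j
    simp only [Matrix.of_apply, Matrix.single_apply, Matrix.diagonal_apply, ← ite_and,
      and_comm (a := κ i = κ' i)]
  rw [rowDet_apply, hdiag, Matrix.det_diagonal, Finset.prod_ite_zero, Finset.prod_const_one,
    Pi.single_apply]
  simp [funext_iff, eq_comm]

/-- The endomorphism of `(ι → α) → K` applying the matrix `Q` to the argument with index `i`. -/
noncomputable def siteOperator [Fintype α] (Q : Matrix α α K) (i : ι) :
    ((ι → α) → K) →ₗ[K] ((ι → α) → K) :=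
  LinearMap.pi fun κ ↦ ∑ m, Q (κ i) m • LinearMap.proj (Function.update κ i m)

lemma siteOperator_rowDet [Fintype α] (Q : Matrix α α K) (i : ι) (P : ι → Matrix α ι K) :
    siteOperator Q i (rowDet P) = rowDet (Function.update P i (Q * P i)) := by
  ext κ
  have hrow (m : α) (B : Matrix α ι K) :
      (fun k ↦ Function.update P i B k (Function.update κ i m k)) =
        Function.update (fun k ↦ P k (κ k)) i (B m) := by
    ext k j
    obtain rfl | hk := eq_or_ne k i <;> simp [*]
  have hleft (m : α) : rowDet P (Function.update κ i m) =
      Matrix.detRowAlternating (Function.update (fun k ↦ P k (κ k)) i (P i m)) := by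
    rw [← hrow, Function.update_eq_self]
    rfl
  have hright : rowDet (Function.update P i (Q * P i)) κ =
      Matrix.detRowAlternating (Function.update (fun k ↦ P k (κ k)) i ((Q * P i) (κ i))) := by
    rw [← hrow, Function.update_eq_self]
    rfl
  have hmul : (Q * P i) (κ i) = ∑ m, Q (κ i) m • P i m := by
    ext j
    simp [Matrix.mul_apply]
  rw [hright, hmul, AlternatingMap.map_update_sum]
  simp [siteOperator, hleft]

end RowDet

section SiteMatrices

variable {n : ℕ}

/-- The multiplication by `x` on `ℂ[x] / x ^ (2 * n + 1)`, in the basis of monomials. -/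
def raising (n : ℕ) : Matrix (Fin (2 * n + 1)) (Fin (2 * n + 1)) ℂ :=
  Matrix.of fun m m' ↦ if (m' : ℕ) + 1 = m then 1 else 0

/-- The factor by which the Dunkl operator of `ℤ / 2` with parameter `(2 * n + 1) / 2` maps
`x ^ m` to `x ^ (m - 1)`. It vanishes for `m = 2 * n + 1`, so that this operator descends to
`ℂ[x] / x ^ (2 * n + 1)`. -/
noncomputable def dunklCoeff (n m : ℕ) : ℂ := if Even m then m else m - (2 * n + 1)

/-- The Dunkl operator of `ℤ / 2` with parameter `(2 * n + 1) / 2` on `ℂ[x] / x ^ (2 * n + 1)`, in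
the basis of monomials. -/
noncomputable def lowering (n : ℕ) : Matrix (Fin (2 * n + 1)) (Fin (2 * n + 1)) ℂ :=
  Matrix.of fun m m' ↦ if (m' : ℕ) = m + 1 then dunklCoeff n m' else 0

/-- The matrix whose columns are the odd monomials of `ℂ[x] / x ^ (2 * n + 1)`. -/
def oddColumns (n : ℕ) : Matrix (Fin (2 * n + 1)) (Fin n) ℂ :=
  Matrix.of fun m j ↦ if (m : ℕ) = 2 * j + 1 then 1 else 0

/-- The images of the odd monomials under `x ^ m.1 * y ^ m.2`, where `x` acts by multiplication and
`y` by the Dunkl operator. -/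
noncomputable def siteMatrix (n : ℕ) (m : ℕ × ℕ) : Matrix (Fin (2 * n + 1)) (Fin n) ℂ :=
  raising n ^ m.1 * lowering n ^ m.2 * oddColumns n

lemma dunklCoeff_zero : dunklCoeff n 0 = 0 := by
  simp [dunklCoeff]

lemma dunklCoeff_two_mul_add_one : dunklCoeff n (2 * n + 1) = 0 := by
  simp [dunklCoeff]

lemma dunklCoeff_ne_zero {m : ℕ} (hm : m ≠ 0) (hmn : m < 2 * n + 1) : dunklCoeff n m ≠ 0 := by
  rw [dunklCoeff]
  split_ifs
  · exact_mod_cast hm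
  · rw [sub_ne_zero]
    exact_mod_cast hmn.ne

lemma dunklCoeff_succ (m : ℕ) :
    dunklCoeff n (m + 1) = dunklCoeff n m + (1 - (-1) ^ m * (2 * n + 1)) := by
  obtain h | h := m.even_or_odd
  · simp only [dunklCoeff, Nat.even_add_one, h, not_true_eq_false, if_true, if_false,
      Nat.cast_add_one, h.neg_one_pow]
    ring
  · simp only [dunklCoeff, Nat.even_add_one, Nat.not_even_iff_odd.2 h, not_false_eq_true, if_true,
      if_false, Nat.cast_add_one, h.neg_one_pow]
    ring

variable {β : Type*} (A : Matrix (Fin (2 * n + 1)) β ℂ)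

lemma raising_mul_apply_zero (j : β) : (raising n * A) 0 j = 0 := by
  simp [raising, Matrix.mul_apply]

lemma raising_mul_apply_succ (m : Fin (2 * n)) (j : β) :
    (raising n * A) m.succ j = A m.castSucc j := by
  simp [raising, Matrix.mul_apply, Fin.sum_univ_castSucc, Fin.val_inj, m.isLt.ne']

lemma lowering_mul_apply_last (j : β) : (lowering n * A) (Fin.last (2 * n)) j = 0 := by
  rw [Matrix.mul_apply]
  exact Finset.sum_eq_zero fun k _ ↦ by simp [lowering, k.isLt.ne]

lemma lowering_mul_apply_castSucc (m : Fin (2 * n)) (j : β) :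
    (lowering n * A) m.castSucc j = dunklCoeff n (m + 1) * A m.succ j := by
  simp [lowering, Matrix.mul_apply, Fin.sum_univ_succ, Fin.val_inj]

lemma raising_mul_lowering_mul_apply (m : Fin (2 * n + 1)) (j : β) :
    (raising n * (lowering n * A)) m j = dunklCoeff n m * A m j := by
  induction m using Fin.cases with
  | zero => simp [raising_mul_apply_zero, dunklCoeff_zero]
  | succ m => simp [raising_mul_apply_succ, lowering_mul_apply_castSucc]

lemma lowering_mul_raising_mul_apply (m : Fin (2 * n + 1)) (j : β) :
    (lowering n * (raising n * A)) m j = dunklCoeff n (m + 1) * A m j := by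
  induction m using Fin.lastCases with
  | last => simp [lowering_mul_apply_last, dunklCoeff_two_mul_add_one]
  | cast m => simp [lowering_mul_apply_castSucc, raising_mul_apply_succ]

lemma raising_mul_siteMatrix (a b : ℕ) :
    raising n * siteMatrix n (a, b) = siteMatrix n (a + 1, b) := by
  simp only [siteMatrix, pow_succ', Matrix.mul_assoc]

lemma lowering_mul_siteMatrix_zero (b : ℕ) :
    lowering n * siteMatrix n (0, b) = siteMatrix n (0, b + 1) := by
  simp only [siteMatrix, pow_zero, pow_succ', Matrix.mul_assoc, one_mul]

lemma siteMatrix_apply (a b : ℕ) (m : Fin (2 * n + 1)) (j : Fin n) :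
    siteMatrix n (a, b) m j = if (m : ℕ) + b = 2 * j + 1 + a then
      ∏ t ∈ Finset.range b, dunklCoeff n (2 * j + 1 - t) else 0 := by
  induction a generalizing m with
  | zero =>
    induction b generalizing m with
    | zero => simp [siteMatrix, oddColumns]
    | succ b ih =>
      rw [← lowering_mul_siteMatrix_zero]
      induction m using Fin.lastCases with
      | last =>
        rw [lowering_mul_apply_last, if_neg (by simp only [Fin.val_last]; omega)]
      | cast m =>
        rw [lowering_mul_apply_castSucc, ih, mul_ite, mul_zero, Finset.prod_range_succ,
          mul_comm (dunklCoeff n _)]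
        refine ite_congr (by simp only [Fin.val_castSucc, Fin.val_succ, eq_iff_iff]; omega)
          (fun h ↦ ?_) fun _ ↦ rfl
        rw [Fin.val_castSucc] at h
        rw [show 2 * (j : ℕ) + 1 - b = m + 1 by omega]
  | succ a ih =>
    rw [← raising_mul_siteMatrix]
    induction m using Fin.cases with
    | zero =>
      rw [raising_mul_apply_zero, eq_comm, ite_eq_right_iff]
      intro h
      refine Finset.prod_eq_zero (Finset.mem_range.2 (?_ : 2 * (j : ℕ) + 1 < b)) ?_
      · rw [Fin.val_zero] at h
        omega
      · rw [Nat.sub_self, dunklCoeff_zero]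
    | succ m =>
      rw [raising_mul_apply_succ, ih]
      exact if_congr (by simp only [Fin.val_castSucc, Fin.val_succ]; omega) rfl rfl

lemma siteMatrix_apply_ne_zero_iff {a b : ℕ} {m : Fin (2 * n + 1)} {j : Fin n} :
    siteMatrix n (a, b) m j ≠ 0 ↔ (m : ℕ) + b = 2 * j + 1 + a ∧ b ≤ 2 * j + 1 := by
  rw [siteMatrix_apply, ne_eq, ite_eq_right_iff, Classical.not_imp, Finset.prod_eq_zero_iff]
  simp only [Finset.mem_range, not_exists, not_and, ← ne_eq]
  refine and_congr_right fun _ ↦ ⟨fun h ↦ ?_, fun h t ht ↦ dunklCoeff_ne_zero ?_ ?_⟩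
  · by_contra! hlt
    exact h _ hlt (by rw [Nat.sub_self, dunklCoeff_zero])
  all_goals omega

lemma siteMatrix_eq_zero_of_even {m : ℕ × ℕ} {k : Fin (2 * n + 1)} (h : Even (bideg m + k)) :
    siteMatrix n m k = 0 := by
  ext j
  by_contra hne
  have hk := (siteMatrix_apply_ne_zero_iff.1 hne).1
  obtain ⟨r, hr⟩ := h
  rw [bideg_apply] at hr
  omega

lemma exists_lowering_mul_siteMatrix_succ (a b : ℕ) : ∃ c : ℂ,
    lowering n * siteMatrix n (a + 1, b) =
      siteMatrix n (a + 1, b + 1) + c • siteMatrix n (a, b) := by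
  have hcomm (a : ℕ) : ∃ c : ℂ, lowering n * (raising n * siteMatrix n (a, b)) =
      raising n * (lowering n * siteMatrix n (a, b)) + c • siteMatrix n (a, b) := by
    refine ⟨1 - (-1) ^ (a + b + 1) * (2 * n + 1), Matrix.ext fun m j ↦ ?_⟩
    rw [Matrix.add_apply, Matrix.smul_apply, raising_mul_lowering_mul_apply,
      lowering_mul_raising_mul_apply, dunklCoeff_succ, smul_eq_mul, ← add_mul]
    by_cases h : Even (a + b + m)
    · rw [siteMatrix_eq_zero_of_even h]
      simp
    · have hsign : (-1 : ℂ) ^ (m : ℕ) = (-1) ^ (a + b + 1) :=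
        neg_one_pow_congr (by rw [Nat.even_add_one]; rw [Nat.even_add] at h; tauto)
      rw [hsign]
  induction a with
  | zero =>
    obtain ⟨c, hc⟩ := hcomm 0
    exact ⟨c, by rwa [raising_mul_siteMatrix, lowering_mul_siteMatrix_zero,
      raising_mul_siteMatrix] at hc⟩
  | succ a ih =>
    obtain ⟨c, hc⟩ := hcomm (a + 1)
    obtain ⟨c', hc'⟩ := ih
    refine ⟨c + c', ?_⟩
    rw [← raising_mul_siteMatrix, hc, hc', Matrix.mul_add, raising_mul_siteMatrix, Matrix.mul_smul,
      raising_mul_siteMatrix, add_assoc, ← add_smul, add_comm c]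

end SiteMatrices

section DunklMap

variable {n : ℕ}

/-- The linear map sending the monomial with exponents `e i` at the sites `i` to the row
determinant of the matrices `siteMatrix n (e i)`. -/
noncomputable def dunklMap (n : ℕ) : DiagonalRing n →ₗ[ℂ] ((Fin n → Fin (2 * n + 1)) → ℂ) :=
  (monBasis n).constr ℂ fun e ↦ rowDet (siteMatrix n ∘ e)

lemma dunklMap_mon (e : Fin n → ℕ × ℕ) : dunklMap n (mon e) = rowDet (siteMatrix n ∘ e) := by
  rw [dunklMap, ← monBasis_apply, Module.Basis.constr_basis]

lemma dunklMap_mon_update (e : Fin n → ℕ × ℕ) (i : Fin n) (m : ℕ × ℕ) :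
    dunklMap n (mon (Function.update e i m)) =
      rowDet (Function.update (siteMatrix n ∘ e) i (siteMatrix n m)) := by
  rw [dunklMap_mon, Function.comp_update]

lemma mon_single_mul (e : Fin n → ℕ × ℕ) (i : Fin n) (m : ℕ × ℕ) :
    mon (Pi.single i m) * mon e = mon (Function.update e i (m + e i)) := by
  rw [← mon_add]
  congr 1
  ext1 k
  obtain rfl | hk := eq_or_ne k i <;> simp [*]

lemma dunklMap_comp_perm (f : DiagonalRing n) (σ : Equiv.Perm (Fin n))
    (κ : Fin n → Fin (2 * n + 1)) :
    dunklMap n f (κ ∘ σ) = (Equiv.Perm.sign σ : ℤ) * dunklMap n (bAct n 1 σ f) κ := by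
  suffices LinearMap.proj (κ ∘ σ) ∘ₗ dunklMap n = ((Equiv.Perm.sign σ : ℤ) : ℂ) •
      (LinearMap.proj κ ∘ₗ dunklMap n ∘ₗ (bAct n 1 σ).toLinearMap) from LinearMap.congr_fun this f
  refine (monBasis n).ext fun e ↦ ?_
  simp only [monBasis_apply, LinearMap.comp_apply, LinearMap.smul_apply, LinearMap.proj_apply,
    AlgHom.toLinearMap_apply, bAct_one_mon, dunklMap_mon, smul_eq_mul, ← rowDet_comp_perm,
    Function.comp_assoc, Equiv.symm_comp_self, Function.comp_id]

lemma dunklMap_mem_alternatingFunctions {f : DiagonalRing n} (hf : ∀ σ, bAct n 1 σ f = f) :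
    dunklMap n f ∈ alternatingFunctions ℂ (Fin (2 * n + 1)) n := fun σ κ ↦ by
  rw [dunklMap_comp_perm, hf]

lemma dunklMap_mon_eq_zero {e : Fin n → ℕ × ℕ} {κ : Fin n → Fin (2 * n + 1)} {i : Fin n}
    (h : Even (bideg (e i) + κ i)) : dunklMap n (mon e) κ = 0 := by
  rw [dunklMap_mon]
  exact rowDet_eq_zero_of_row (siteMatrix_eq_zero_of_even h)

lemma dunklMap_X_inl_mul (i : Fin n) (f : DiagonalRing n) :
    dunklMap n (X (Sum.inl i) * f) = siteOperator (raising n) i (dunklMap n f) := by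
  suffices dunklMap n ∘ₗ LinearMap.mulLeft ℂ (X (Sum.inl i)) =
    siteOperator (raising n) i ∘ₗ dunklMap n from LinearMap.congr_fun this f
  refine (monBasis n).ext fun e ↦ ?_
  rw [monBasis_apply, LinearMap.comp_apply, LinearMap.mulLeft_apply, LinearMap.comp_apply,
    X_inl_eq_mon, mon_single_mul, dunklMap_mon_update, dunklMap_mon, siteOperator_rowDet,
    Function.comp_apply, ← Prod.mk.eta (p := e i), raising_mul_siteMatrix, Prod.mk_add_mk,
    zero_add, add_comm 1]

lemma dunklMap_X_inr_mul_mon_sub_mem (i : Fin n) (e : Fin n → ℕ × ℕ) :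
    dunklMap n (X (Sum.inr i) * mon e) - siteOperator (lowering n) i (dunklMap n (mon e)) ∈
      (degreeLT ℂ (Fin n ⊕ Fin n) (∑ k, bideg (e k))).map (dunklMap n) := by
  rw [X_inr_eq_mon, mon_single_mul, dunklMap_mon_update, dunklMap_mon, siteOperator_rowDet,
    Function.comp_apply]
  rcases hei : e i with ⟨_ | a, b⟩
  · rw [lowering_mul_siteMatrix_zero, Prod.mk_add_mk, zero_add, add_comm 1, sub_self]
    exact zero_mem _
  · obtain ⟨c, hc⟩ := exists_lowering_mul_siteMatrix_succ (n := n) a b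
    have hlt : ∑ k, bideg (Function.update e i (a, b) k) < ∑ k, bideg (e k) := by
      refine Finset.sum_lt_sum (fun k _ ↦ ?_) ⟨i, Finset.mem_univ i, ?_⟩
      · obtain rfl | hk := eq_or_ne k i <;> simp [*, bideg_apply]
      · simp [hei, bideg_apply]
    rw [hc, MultilinearMap.map_update_add, MultilinearMap.map_update_smul, Prod.mk_add_mk,
      zero_add, add_comm 1, sub_add_cancel_left, ← dunklMap_mon_update]
    exact neg_mem (Submodule.smul_mem _ _
      (Submodule.mem_map_of_mem (mem_degreeLT_of_isHomogeneous (mon_isHomogeneous _) hlt)))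

lemma isFiltered_dunklMap (n : ℕ) : IsFiltered (dunklMap n) := by
  rintro (i | i)
  · refine ⟨siteOperator (raising n) i, fun d f _ ↦ ?_⟩
    rw [dunklMap_X_inl_mul, sub_self]
    exact zero_mem _
  · refine ⟨siteOperator (lowering n) i, fun d ↦ ?_⟩
    suffices degreeLT ℂ (Fin n ⊕ Fin n) d ≤ ((degreeLT ℂ _ d).map (dunklMap n)).comap
        (dunklMap n ∘ₗ LinearMap.mulLeft ℂ (X (Sum.inr i)) -
          siteOperator (lowering n) i ∘ₗ dunklMap n) from this
    nth_rw 1 [degreeLT_eq_span, Submodule.span_le]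
    rintro _ ⟨s, hs, rfl⟩
    obtain ⟨e, rfl⟩ := (exponentEquiv n).surjective s
    refine Submodule.map_mono (degreeLT_mono ?_) (dunklMap_X_inr_mul_mon_sub_mem i e)
    rw [← degree_exponentEquiv]
    exact le_of_lt hs

lemma matrix_mem_of_single_mem {α β K : Type*} [Finite α] [Finite β] [DecidableEq α]
    [DecidableEq β] [Semiring K] {S : Submodule K (Matrix α β K)} {A : Matrix α β K}
    (h : ∀ m j, A m j ≠ 0 → Matrix.single m j 1 ∈ S) : A ∈ S := by
  cases nonempty_fintype α
  cases nonempty_fintype β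
  rw [Matrix.matrix_eq_sum_single A]
  refine sum_mem fun m _ ↦ sum_mem fun j _ ↦ ?_
  by_cases h0 : A m j = 0
  · rw [h0, Matrix.single_zero]
    exact zero_mem S
  · simpa [Matrix.smul_single] using S.smul_mem (A m j) (h m j h0)

lemma single_mem_span_range_siteMatrix (m : Fin (2 * n + 1)) (j : Fin n) :
    Matrix.single m j 1 ∈ Submodule.span ℂ (Set.range (siteMatrix n)) := by
  induction j using WellFoundedGT.induction generalizing m with
  | _ j ih =>
  -- apart from its entry `(m, j)`, the matrix `B` is supported on the columns to the right of `j`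
  set B := siteMatrix n (m, 2 * j + 1)
  have hB : B ∈ Submodule.span ℂ (Set.range (siteMatrix n)) := Submodule.subset_span ⟨_, rfl⟩
  have hc : B m j ≠ 0 := siteMatrix_apply_ne_zero_iff.2 ⟨by omega, le_rfl⟩
  have hrest : B - B m j • Matrix.single m j 1 ∈ Submodule.span ℂ (Set.range (siteMatrix n)) := by
    refine matrix_mem_of_single_mem fun m' j' hne ↦ ih j' ?_ m'
    by_cases hmj : m' = m ∧ j' = j
    · obtain ⟨rfl, rfl⟩ := hmj
      simp at hne
    · have hB' : B m' j' ≠ 0 := by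
        rwa [Matrix.sub_apply, Matrix.smul_apply, Matrix.single_apply, if_neg (by tauto),
          smul_zero, sub_zero] at hne
      obtain ⟨hrow, hcol⟩ := siteMatrix_apply_ne_zero_iff.1 hB'
      simp only [Fin.ext_iff] at hmj
      rw [Fin.lt_def]
      omega
  rwa [Submodule.sub_mem_iff_right _ hB, Submodule.smul_mem_iff _ hc] at hrest

lemma span_range_siteMatrix (n : ℕ) : Submodule.span ℂ (Set.range (siteMatrix n)) = ⊤ :=
  eq_top_iff.2 fun _ _ ↦ matrix_mem_of_single_mem fun m j _ ↦ single_mem_span_range_siteMatrix m j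

theorem dunklMap_surjective (n : ℕ) : Function.Surjective (dunklMap n) := by
  rw [← LinearMap.range_eq_top, eq_top_iff, ← (Pi.basisFun ℂ _).span_eq, Submodule.span_le]
  rintro _ ⟨κ, rfl⟩
  rw [Pi.basisFun_apply, ← rowDet_single]
  refine multilinearMap_mem_of_span_eq_top rowDet (span_range_siteMatrix n) (fun P hP ↦ ?_) _
  choose e he using hP
  exact ⟨mon e, by rw [dunklMap_mon, ← funext he, Function.comp_def]⟩

end DunklMap

section DunklIdeal

variable {n : ℕ}

/-- The ideal of symbols of the kernel of `dunklMap n`. -/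
noncomputable abbrev dunklIdeal (n : ℕ) : Ideal (DiagonalRing n) :=
  symbolIdeal (dunklMap n) (isFiltered_dunklMap n)

lemma det_eq_prod_diag_of_le {ι R α : Type*} [Fintype ι] [DecidableEq ι] [CommRing R]
    [LinearOrder α] (M : Matrix ι ι R) {b : ι → α} (hb : Function.Injective b)
    (h : ∀ i j, M i j ≠ 0 → b i ≤ b j) : M.det = ∏ i, M i i := by
  let : LinearOrder ι := LinearOrder.lift' b hb
  convert Matrix.det_of_isUpperTriangular (M := M) fun i j hij ↦ by_contra fun hne ↦ ?_
  exact not_le_of_gt hij (h i j hne)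

lemma dunklMap_one_oddTuple_ne_zero : dunklMap n 1 (oddTuple n) ≠ 0 := by
  rw [← mon_zero, dunklMap_mon, rowDet_apply, det_eq_prod_diag_of_le _ Function.injective_id]
  · exact Finset.prod_ne_zero_iff.2 fun i _ ↦ siteMatrix_apply_ne_zero_iff.2 (by simp [oddTuple])
  · intro i j hij
    have := (siteMatrix_apply_ne_zero_iff.1 hij).1
    simp only [oddTuple] at this
    simp only [id_eq, Fin.le_def]
    omega

lemma dunklMap_polarizedPowerSum_eq_smul {m : ℕ × ℕ} (heven : Even (bideg m)) :
    ∃ c : ℂ, dunklMap n (polarizedPowerSum n m) = c • dunklMap n 1 := by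
  set u := dunklMap n (polarizedPowerSum n m)
  set u₁ := dunklMap n 1
  refine ⟨u (oddTuple n) / u₁ (oddTuple n), alternatingFunctions_ext
    (dunklMap_mem_alternatingFunctions fun σ ↦ bAct_one_polarizedPowerSum σ m)
    (Submodule.smul_mem _ _ (dunklMap_mem_alternatingFunctions fun σ ↦ map_one _))
    fun κ hκ ↦ ?_⟩
  by_cases hodd : ∀ i, Odd (κ i : ℕ)
  · rw [eq_oddTuple hκ hodd, Pi.smul_apply, smul_eq_mul,
      div_mul_cancel₀ _ dunklMap_one_oddTuple_ne_zero]
  · simp only [not_forall, Nat.not_odd_iff_even] at hodd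
    obtain ⟨i, hi⟩ := hodd
    have hu : u κ = 0 := by
      simp only [u, polarizedPowerSum, map_sum, Finset.sum_apply]
      refine Finset.sum_eq_zero fun k _ ↦ dunklMap_mon_eq_zero (i := i) (Even.add ?_ hi)
      obtain rfl | hki := eq_or_ne k i <;> simp [*, Ne.symm]
    have hu₁ : u₁ κ = 0 := by
      simp only [u₁, ← mon_zero]
      exact dunklMap_mon_eq_zero (i := i) (by simpa using hi)
    rw [hu, Pi.smul_apply, hu₁, smul_zero]

theorem evenPowerSumIdeal_le_dunklIdeal : evenPowerSumIdeal n ≤ dunklIdeal n := by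
  refine Ideal.span_le.2 ?_
  rintro _ ⟨m, hm, heven, rfl⟩
  have hhom : (polarizedPowerSum n m).IsHomogeneous (bideg m) := by
    refine IsHomogeneous.sum _ _ _ fun k _ ↦ ?_
    convert mon_isHomogeneous (Pi.single k m)
    simp [Pi.single_apply, apply_ite bideg]
  obtain ⟨c, hc⟩ := dunklMap_polarizedPowerSum_eq_smul (n := n) heven
  refine mem_symbolIdeal_of_isHomogeneous hhom ?_
  rw [hc]
  exact Submodule.smul_mem _ _ (Submodule.mem_map_of_mem (mem_degreeLT_of_isHomogeneous
    (isHomogeneous_one _ _) (by have := two_le_bideg hm heven; omega)))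

/-- The exponents of the monomial `y₀ ⋯ y_{k-1} * x_k ⋯ x_{n-1}`. -/
def splitExponent (n k : ℕ) (i : Fin n) : ℕ × ℕ := if (i : ℕ) < k then (0, 1) else (1, 0)

lemma sum_snd_splitExponent {k : ℕ} (hk : k ≤ n) : ∑ i, (splitExponent n k i).2 = k := by
  simp [splitExponent, apply_ite Prod.snd, Fin.card_filter_val_lt, hk]

lemma sum_bideg_splitExponent (k : ℕ) : ∑ i, bideg (splitExponent n k i) = n := by
  simp [splitExponent, apply_ite bideg, bideg_apply]

lemma eq_of_splitExponent_comp_eq {k k' : Fin (n + 1)} {σ : Equiv.Perm (Fin n)}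
    (h : splitExponent n k ∘ σ = splitExponent n k') : k = k' := by
  refine Fin.ext ?_
  rw [← sum_snd_splitExponent k.is_le, ← sum_snd_splitExponent k'.is_le, ← h,
    ← Equiv.sum_comp σ fun i ↦ (splitExponent n k i).2]
  rfl

lemma val_evenTuple (k : Fin (n + 1)) (i : Fin n) :
    (evenTuple n k i : ℕ) = if (i : ℕ) < k then 2 * (i : ℕ) else 2 * (i : ℕ) + 2 := by
  simp only [evenTuple, Fin.succAbove, Fin.lt_def, Fin.val_castSucc]
  split_ifs
  · rfl
  · rw [Fin.val_succ, mul_add_one]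

lemma dunklMap_mon_evenTuple_ne_zero_iff {e : Fin n → ℕ × ℕ}
    (he : ∀ i, e i = (0, 1) ∨ e i = (1, 0)) (k : Fin (n + 1)) :
    dunklMap n (mon e) (evenTuple n k) ≠ 0 ↔ e = splitExponent n k := by
  have hentry (i j : Fin n) : siteMatrix n (e i) (evenTuple n k i) j ≠ 0 ↔
      (evenTuple n k i : ℕ) = if e i = (0, 1) then 2 * (j : ℕ) else 2 * j + 2 := by
    obtain hi | hi := he i <;> simp [hi, siteMatrix_apply_ne_zero_iff]
  have hdiag (i : Fin n) : siteMatrix n (e i) (evenTuple n k i) i ≠ 0 ↔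
      e i = splitExponent n k i := by
    rw [hentry, val_evenTuple, splitExponent]
    obtain hi | hi := he i <;> split_ifs <;> simp_all
  let b (i : Fin n) : ℕ := if (i : ℕ) < k then k - i else i + 1
  have hb : Function.Injective b := fun i j hij ↦ by
    simp only [b] at hij
    split_ifs at hij <;> omega
  rw [dunklMap_mon, rowDet_apply, det_eq_prod_diag_of_le _ hb, Finset.prod_ne_zero_iff, funext_iff]
  · simpa using forall_congr' hdiag
  · intro i j hij
    have := (hentry i j).1 hij
    rw [val_evenTuple] at this
    simp only [b]
    split_ifs at this ⊢ <;> omega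

lemma dunklMap_symmetrize_splitExponent (k k' : Fin (n + 1)) :
    dunklMap n (symmetrize n (mon (splitExponent n k))) (evenTuple n k') ≠ 0 ↔ k = k' := by
  have hterm (σ : Equiv.Perm (Fin n)) :
      dunklMap n (mon (splitExponent n k ∘ σ)) (evenTuple n k') ≠ 0 ↔
        splitExponent n k ∘ σ = splitExponent n k' :=
    dunklMap_mon_evenTuple_ne_zero_iff (fun i ↦ ite_eq_or_eq _ _ _) k'
  simp only [symmetrize_mon, map_sum, Finset.sum_apply]
  refine ⟨fun h ↦ ?_, ?_⟩
  · obtain ⟨σ, -, hσ⟩ := Finset.exists_ne_zero_of_sum_ne_zero h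
    exact eq_of_splitExponent_comp_eq ((hterm σ).1 hσ)
  · rintro rfl
    set c := dunklMap n (mon (splitExponent n k)) (evenTuple n k)
    have hc : c ≠ 0 := (hterm 1).2 rfl
    have heq (σ : Equiv.Perm (Fin n)) : dunklMap n (mon (splitExponent n k ∘ σ)) (evenTuple n k) =
        if splitExponent n k ∘ σ = splitExponent n k then c else 0 := by
      split_ifs with h
      · rw [h]
      · exact not_not.1 (mt (hterm σ).1 h)
    rw [Finset.sum_congr rfl fun σ _ ↦ heq σ, ← Finset.sum_filter, Finset.sum_const, nsmul_eq_mul]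
    refine mul_ne_zero (Nat.cast_ne_zero.2 (Finset.card_ne_zero.2 ⟨1, ?_⟩)) hc
    simp

lemma symmetrize_mon_isHomogeneous (e : Fin n → ℕ × ℕ) :
    (symmetrize n (mon e)).IsHomogeneous (∑ i, bideg (e i)) := by
  rw [symmetrize_mon]
  refine IsHomogeneous.sum _ _ _ fun σ _ ↦ ?_
  rw [← Equiv.sum_comp σ]
  exact mon_isHomogeneous (e ∘ σ)

lemma dunklMap_symmetrize_mon_eq_zero {e : Fin n → ℕ × ℕ} (hodd : ∀ i, Odd (bideg (e i)))
    {κ : Fin n → Fin (2 * n + 1)} {i : Fin n} (hi : Odd (κ i : ℕ)) :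
    dunklMap n (symmetrize n (mon e)) κ = 0 := by
  simp only [symmetrize_mon, map_sum, Finset.sum_apply]
  exact Finset.sum_eq_zero fun σ _ ↦ dunklMap_mon_eq_zero (i := i) ((hodd (σ i)).add_odd hi)

lemma odd_bideg_splitExponent (k : ℕ) (i : Fin n) : Odd (bideg (splitExponent n k i)) := by
  unfold splitExponent
  split_ifs <;> simp [bideg_apply]

lemma dunklMap_symmetrize_mon_mem_span {e : Fin n → ℕ × ℕ} (hodd : ∀ i, Odd (bideg (e i))) :
    dunklMap n (symmetrize n (mon e)) ∈ Submodule.span ℂ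
      (Set.range fun k : Fin (n + 1) ↦ dunklMap n (symmetrize n (mon (splitExponent n k)))) := by
  set u := dunklMap n (symmetrize n (mon e))
  set v := fun k : Fin (n + 1) ↦ dunklMap n (symmetrize n (mon (splitExponent n k)))
  have halt (e) : dunklMap n (symmetrize n (mon e)) ∈ alternatingFunctions ℂ (Fin (2 * n + 1)) n :=
    dunklMap_mem_alternatingFunctions fun σ ↦ bAct_one_symmetrize_mon σ e
  have hu : u = ∑ k, (u (evenTuple n k) / v k (evenTuple n k)) • v k := by
    refine alternatingFunctions_ext (halt e)
      (Submodule.sum_mem _ fun k _ ↦ Submodule.smul_mem _ _ (halt _)) fun κ hκ ↦ ?_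
    simp only [Finset.sum_apply, Pi.smul_apply, smul_eq_mul]
    by_cases heven : ∀ i, Even (κ i : ℕ)
    · obtain ⟨k, rfl⟩ := exists_eq_evenTuple hκ heven
      rw [Finset.sum_eq_single k (fun l _ hl ↦ ?_) (by simp),
        div_mul_cancel₀ _ ((dunklMap_symmetrize_splitExponent k k).2 rfl)]
      have hv : v l (evenTuple n k) = 0 :=
        not_not.1 (mt (dunklMap_symmetrize_splitExponent l k).1 hl)
      rw [hv, mul_zero]
    · simp only [not_forall, Nat.not_even_iff_odd] at heven
      obtain ⟨i, hi⟩ := heven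
      have hu : u κ = 0 := dunklMap_symmetrize_mon_eq_zero hodd hi
      have hv (k : Fin (n + 1)) : v k κ = 0 :=
        dunklMap_symmetrize_mon_eq_zero (odd_bideg_splitExponent k) hi
      simp only [hu, hv, mul_zero, Finset.sum_const_zero]
  rw [hu]
  exact Submodule.sum_mem _ fun k _ ↦
    Submodule.smul_mem _ _ (Submodule.subset_span (Set.mem_range_self k))

lemma symmetrize_mon_mem_dunklIdeal {e : Fin n → ℕ × ℕ} (hodd : ∀ i, Odd (bideg (e i)))
    (hdeg : n < ∑ i, bideg (e i)) : symmetrize n (mon e) ∈ dunklIdeal n := by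
  refine mem_symbolIdeal_of_isHomogeneous (symmetrize_mon_isHomogeneous e)
    (Submodule.span_le.2 ?_ (dunklMap_symmetrize_mon_mem_span hodd))
  rintro _ ⟨k, rfl⟩
  refine Submodule.mem_map_of_mem
    (mem_degreeLT_of_isHomogeneous (symmetrize_mon_isHomogeneous _) ?_)
  rwa [sum_bideg_splitExponent]

theorem symmetricCubic_mem_dunklIdeal (hn : 0 < n) (w : ℕ) : symmetricCubic n w ∈ dunklIdeal n := by
  refine symmetrize_mon_mem_dunklIdeal (odd_bideg_leadingExponent w) ?_
  calc n = ∑ _j : Fin n, 1 := by simp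
    _ < ∑ j, bideg (leadingExponent n w j) :=
      Finset.sum_lt_sum (fun j _ ↦ (odd_bideg_leadingExponent w j).pos)
        ⟨⟨0, hn⟩, Finset.mem_univ _, by simp [leadingExponent, bideg_apply]⟩

end DunklIdeal

section Finiteness

lemma finite_quotient_of_isIntegral_X {σ K : Type*} [Finite σ] [Field K]
    {I : Ideal (MvPolynomial σ K)}
    (h : ∀ v, IsIntegral K (Ideal.Quotient.mk I (X v))) :
    Module.Finite K (MvPolynomial σ K ⧸ I) := by
  have : Algebra.IsIntegral K (MvPolynomial σ K ⧸ I) := ⟨fun q ↦ by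
    obtain ⟨f, rfl⟩ := Ideal.Quotient.mk_surjective q
    induction f using MvPolynomial.induction_on with
    | C a => exact isIntegral_algebraMap (R := K) (A := MvPolynomial σ K ⧸ I) (x := a)
    | add p q hp hq => exact map_add (Ideal.Quotient.mk I) p q ▸ hp.add hq
    | mul_X p v hp => exact map_mul (Ideal.Quotient.mk I) p (X v) ▸ hp.mul (h v)⟩
  have : Algebra.FiniteType K (MvPolynomial σ K ⧸ I) :=
    .of_surjective (Ideal.Quotient.mkₐ K I) (Ideal.Quotient.mkₐ_surjective K I)
  exact Algebra.IsIntegral.finite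

variable {n : ℕ}

lemma bAct_X_sq (ε : Fin n → ℤˣ) (σ : Equiv.Perm (Fin n)) (v : Fin n ⊕ Fin n) :
    bAct n ε σ (X v ^ 2) = X (Sum.map σ σ v) ^ 2 := by
  have hε (i : Fin n) : ((ε i : ℤ) : ℂ) ^ 2 = 1 := by
    rw [← Int.cast_pow, ← Units.val_pow_eq_pow_val, Int.units_sq, Units.val_one, Int.cast_one]
  obtain i | i := v <;> simp [bAct, smul_pow, hε]

lemma mk_diagIdeal_of_forall_bAct_eq {f : DiagonalRing n} (hf : ∀ ε σ, bAct n ε σ f = f) :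
    Ideal.Quotient.mk (diagIdeal n) f =
      algebraMap ℂ (DiagonalRing n ⧸ diagIdeal n) (constantCoeff f) := by
  refine (Ideal.Quotient.eq (y := C (constantCoeff f))).2
    (Ideal.subset_span ⟨fun ε σ ↦ ?_, by simp⟩)
  rw [map_sub, hf, ← algebraMap_eq, AlgHom.commutes]

lemma isIntegral_mk_diagIdeal_X (v : Fin n ⊕ Fin n) :
    IsIntegral ℂ (Ideal.Quotient.mk (diagIdeal n) (X v)) := by
  refine IsIntegral.of_pow two_pos ?_
  set P : Polynomial (DiagonalRing n) := ∏ v, (Polynomial.X - Polynomial.C (X v ^ 2)) with hP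
  have hmonic : P.Monic := Polynomial.monic_prod_of_monic _ _ fun v _ ↦ Polynomial.monic_X_sub_C _
  have hinv (ε : Fin n → ℤˣ) (σ : Equiv.Perm (Fin n)) :
      P.map (bAct n ε σ : DiagonalRing n →+* DiagonalRing n) = P := by
    rw [hP, Polynomial.map_prod]
    refine Fintype.prod_equiv (Equiv.sumCongr σ σ) _ _ fun v ↦ ?_
    rw [Polynomial.map_sub, Polynomial.map_X, Polynomial.map_C, RingHom.coe_coe, bAct_X_sq,
      Equiv.sumCongr_apply]
  have hcoeff : P.map (Ideal.Quotient.mk (diagIdeal n)) =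
      (P.map constantCoeff).map (algebraMap ℂ (DiagonalRing n ⧸ diagIdeal n)) := by
    ext k
    simp only [Polynomial.coeff_map]
    refine mk_diagIdeal_of_forall_bAct_eq fun ε σ ↦ ?_
    conv_rhs => rw [← hinv ε σ, Polynomial.coeff_map, RingHom.coe_coe]
  have hroot : P.eval (X v ^ 2) = 0 := by
    rw [hP, Polynomial.eval_prod]
    exact Finset.prod_eq_zero (Finset.mem_univ v) (by simp)
  refine ⟨P.map constantCoeff, hmonic.map _, ?_⟩
  rw [← Polynomial.eval_map, ← hcoeff, ← map_pow, Polynomial.eval_map, Polynomial.eval₂_hom, hroot,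
    map_zero]

instance finite_quotient_diagIdeal : Module.Finite ℂ (DiagonalRing n ⧸ diagIdeal n) :=
  finite_quotient_of_isIntegral_X isIntegral_mk_diagIdeal_X

end Finiteness

lemma finrank_quotient_add_card_le {K A ι : Type*} [Field K] [CommRing A] [Algebra K A]
    [Fintype ι] {I J : Ideal A} [Module.Finite K (A ⧸ I)] (hIJ : I ≤ J) {z : ι → A}
    (hz : ∀ i, z i ∈ J) {φ : ι → A →ₗ[K] K} (hI : ∀ i, ∀ f ∈ I, φ i f = 0)
    (hself : ∀ i, φ i (z i) ≠ 0) (hne : ∀ i j, i ≠ j → φ i (z j) = 0) :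
    Module.finrank K (A ⧸ J) + Fintype.card ι ≤ Module.finrank K (A ⧸ I) := by
  let q : (A ⧸ I) →ₗ[K] (A ⧸ J) := (Ideal.Quotient.factorₐ K hIJ).toLinearMap
  let zker (i : ι) : LinearMap.ker q :=
    ⟨Ideal.Quotient.mk I (z i), Ideal.Quotient.eq_zero_iff_mem.2 (hz i)⟩
  have hli : LinearIndependent K zker := by
    refine Fintype.linearIndependent_iff.2 fun c hc i ↦ ?_
    have hmem : ∑ j, c j • z j ∈ I := by
      rw [← Ideal.Quotient.eq_zero_iff_mem, ← Ideal.Quotient.mkₐ_eq_mk K, map_sum]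
      simpa [zker] using congrArg Subtype.val hc
    have hφ := hI i _ hmem
    simp only [map_sum, map_smul, smul_eq_mul] at hφ
    rw [Finset.sum_eq_single i (fun j _ hj ↦ by rw [hne i j hj.symm, mul_zero]) (by simp)] at hφ
    exact (mul_eq_zero.1 hφ).resolve_right (hself i)
  have hrank := LinearMap.finrank_range_add_finrank_ker q
  rw [LinearMap.range_eq_top.2 (Ideal.Quotient.factor_surjective hIJ), finrank_top] at hrank
  have hcard := hli.fintype_card_le_finrank
  omega

lemma diagIdeal_le_dunklIdeal {n : ℕ} : diagIdeal n ≤ dunklIdeal n :=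
  diagIdeal_le_evenPowerSumIdeal.trans evenPowerSumIdeal_le_dunklIdeal

lemma pow_le_finrank_quotient_dunklIdeal (n : ℕ) :
    (2 * n + 1) ^ n ≤ Module.finrank ℂ (DiagonalRing n ⧸ dunklIdeal n) := by
  have : Module.Finite ℂ (DiagonalRing n ⧸ dunklIdeal n) :=
    .of_surjective (Ideal.Quotient.factorₐ ℂ diagIdeal_le_dunklIdeal).toLinearMap
      (Ideal.Quotient.factor_surjective diagIdeal_le_dunklIdeal)
  simpa using finrank_le_finrank_quotient_symbolIdeal (isFiltered_dunklMap n)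
    (dunklMap_surjective n)

end DiagonalCoinvariant

open DiagonalCoinvariant

theorem four_mul_error_ge_general (n : ℕ) :
    (2 * n + 1) ^ n + n * (n - 5) ≤
      Module.finrank ℂ (MvPolynomial (Fin n ⊕ Fin n) ℂ ⧸ diagIdeal n) := by
  let z (p : Fin n × Fin (n - 5)) : DiagonalRing n :=
    X (Sum.inl p.1) * symmetricCubic n (p.2 + 3)
  let φ (p : Fin n × Fin (n - 5)) : DiagonalRing n →ₗ[ℂ] ℂ := pairingFunctional p.1 (p.2 + 3)
  have hlt (p : Fin n × Fin (n - 5)) : (p.2 : ℕ) + 3 + 3 ≤ n := by omega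
  have hcard : Module.finrank ℂ (DiagonalRing n ⧸ dunklIdeal n) + Fintype.card (Fin n × Fin (n - 5))
      ≤ Module.finrank ℂ (DiagonalRing n ⧸ diagIdeal n) := by
    refine finrank_quotient_add_card_le (z := z) (φ := φ) diagIdeal_le_dunklIdeal
      (fun p ↦ Ideal.mul_mem_left _ _ (symmetricCubic_mem_dunklIdeal p.1.pos _))
      (fun p f hf ↦ pairingFunctional_eq_zero_of_mem p.1 (by omega) (hlt p)
        (diagIdeal_le_evenPowerSumIdeal hf))
      (fun p ↦ pairingFunctional_X_mul_symmetricCubic_ne_zero p.1 (by omega) (hlt p))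
      fun p r hpr ↦ pairingFunctional_X_mul_symmetricCubic_eq_zero (by omega) ?_
    contrapose! hpr
    exact Prod.ext hpr.1.symm (Fin.ext (by omega))
  rw [Fintype.card_prod, Fintype.card_fin, Fintype.card_fin] at hcard
  exact (Nat.add_le_add_right (pow_le_finrank_quotient_dunklIdeal n) _).trans hcard

/-- For every `n ≥ 4`, the error term `ε(W(Bₙ)) = dim_ℂ R_W − (2n+1)ⁿ` satisfies
`4·ε(W(Bₙ)) ≥ n(n−6)`. -/
theorem four_mul_error_ge (n : ℕ) (hn : 4 ≤ n) :
    (n : ℤ) * ((n : ℤ) - 6) ≤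
      4 * ((Module.finrank ℂ (MvPolynomial (Fin n ⊕ Fin n) ℂ ⧸ diagIdeal n) : ℤ)
        - (2 * n + 1 : ℤ) ^ n) := by
  have h : (2 * n + 1 : ℤ) ^ n + n * ((n - 5 : ℕ) : ℤ) ≤
      Module.finrank ℂ (MvPolynomial (Fin n ⊕ Fin n) ℂ ⧸ diagIdeal n) :=
    mod_cast four_mul_error_ge_general n
  have h₅ : (n : ℤ) - 6 ≤ 4 * ((n - 5 : ℕ) : ℤ) := by omega
  linarith [mul_le_mul_of_nonneg_left h₅ (Nat.cast_nonneg (α := ℤ) n)]
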